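/- arXiv:1107.1571 — 2 statements merged into one kernel-verified Lean document; each statement's English description precedes it below -/
import Mathlib

section
/- Every t ∈ [0,1] that is irrational and algebraic over ℚ belongs to 𝒜. -/
open Filter Finset MeasureTheory

/-- An approximant to a real number `t`: a reduced fraction `u/q` with `q ≥ 1`
and `|t - u/q| < 1/q²`. -/
def IsApproximant (t : ℝ) (u q : ℤ) : Prop :=
  1 ≤ q ∧ Int.gcd u q = 1 ∧ |t - (u : ℝ) / (q : ℝ)| < 1 / (q : ℝ) ^ 2

/-- The set `𝒜_m`: `t ∈ [0,1]` such that for every real `M ≥ m` there is an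
approximant `u/q` to `t` with `M^Δ < q ≤ M^(n-Δ)`. -/
def Aset (n : ℕ) (Δ : ℝ) (m : ℤ) : Set ℝ :=
  {t | t ∈ Set.Icc (0 : ℝ) 1 ∧ ∀ M : ℝ, (m : ℝ) ≤ M →
    ∃ u q : ℤ, IsApproximant t u q ∧ M ^ Δ < (q : ℝ) ∧ (q : ℝ) ≤ M ^ ((n : ℝ) - Δ)}

/-- The set `𝒜`: `t ∈ [0,1]` such that for all sufficiently large `M` there is an
approximant `u/q` to `t` with `M^Δ < q ≤ M^(n-Δ)`. -/
def Aall (n : ℕ) (Δ : ℝ) : Set ℝ :=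
  {t | t ∈ Set.Icc (0 : ℝ) 1 ∧ ∃ M₀ : ℝ, ∀ M : ℝ, M₀ ≤ M →
    ∃ u q : ℤ, IsApproximant t u q ∧ M ^ Δ < (q : ℝ) ∧ (q : ℝ) ≤ M ^ ((n : ℝ) - Δ)}

/-- The set `ℬ_{m,α}`: `t ∈ (0,1]` such that for every real `M ≥ m·t^(-α)` there is an
approximant `u/q` to `t` with `M^Δ < q ≤ M^(n-Δ)`. -/
def Bset (n : ℕ) (Δ : ℝ) (m : ℤ) (α : ℝ) : Set ℝ :=
  {t | t ∈ Set.Ioc (0 : ℝ) 1 ∧ ∀ M : ℝ, (m : ℝ) * t ^ (-α) ≤ M →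
    ∃ u q : ℤ, IsApproximant t u q ∧ M ^ Δ < (q : ℝ) ∧ (q : ℝ) ≤ M ^ ((n : ℝ) - Δ)}


open Filter Finset MeasureTheory
set_option linter.all false
set_option linter.unusedSectionVars false
set_option linter.unusedSimpArgs false
namespace RothAux
open MvPolynomial

variable {σ : Type*} [Fintype σ] [DecidableEq σ]

/-- support predicate -/
def SuppIn (p : (σ →₀ ℕ) → Prop) (P : MvPolynomial σ ℝ) : Prop := ∀ J, coeff J P ≠ 0 → p J

lemma SuppIn.mono {p q : (σ →₀ ℕ) → Prop} {P : MvPolynomial σ ℝ} (h : SuppIn p P)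
    (hpq : ∀ J, p J → q J) : SuppIn q P := fun J hJ => hpq J (h J hJ)

lemma SuppIn.sum {ι : Type*} (s : Finset ι) {p : (σ →₀ ℕ) → Prop} {P : ι → MvPolynomial σ ℝ}
    (h : ∀ i ∈ s, SuppIn p (P i)) : SuppIn p (∑ i ∈ s, P i) := by
  intro J hJ
  rw [coeff_sum] at hJ
  obtain ⟨i, hi, hne⟩ := Finset.exists_ne_zero_of_sum_ne_zero hJ
  exact h i hi J hne

lemma SuppIn.smul {p : (σ →₀ ℕ) → Prop} {P : MvPolynomial σ ℝ} (c : ℝ)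
    (h : SuppIn p P) : SuppIn p (c • P) := by
  intro J hJ
  rw [coeff_smul] at hJ
  exact h J (right_ne_zero_of_mul hJ)

lemma SuppIn.mul {p q s : (σ →₀ ℕ) → Prop} (hpq : ∀ J K, p J → q K → s (J + K))
    {P Q : MvPolynomial σ ℝ} (hP : SuppIn p P) (hQ : SuppIn q Q) : SuppIn s (P * Q) := by
  classical
  intro J hJ
  rw [coeff_mul] at hJ
  obtain ⟨⟨a, b⟩, hab, hne⟩ := Finset.exists_ne_zero_of_sum_ne_zero hJ
  have := Finset.HasAntidiagonal.mem_antidiagonal.1 hab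
  simp only at this hne
  rw [← this]
  exact hpq _ _ (hP a (left_ne_zero_of_mul hne)) (hQ b (right_ne_zero_of_mul hne))

lemma SuppIn.one {p : (σ →₀ ℕ) → Prop} (h : p 0) : SuppIn p (1 : MvPolynomial σ ℝ) := by
  classical
  intro J hJ
  rw [coeff_one] at hJ
  have : 0 = J := by by_contra hc; simp [hc] at hJ
  exact this ▸ h

lemma SuppIn.prod {A ι : Type*} [AddCommMonoid A] {p : A → (σ →₀ ℕ) → Prop}
    (h0 : p 0 0) (hadd : ∀ a b J K, p a J → p b K → p (a + b) (J + K))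
    (s : Finset ι) (a : ι → A) (P : ι → MvPolynomial σ ℝ) (h : ∀ i ∈ s, SuppIn (p (a i)) (P i)) :
    SuppIn (p (∑ i ∈ s, a i)) (∏ i ∈ s, P i) := by
  classical
  induction s using Finset.induction_on with
  | empty => simpa using SuppIn.one h0
  | insert i s hi ih =>
    rw [Finset.sum_insert hi, Finset.prod_insert hi]
    exact SuppIn.mul (hadd _ _) (h i (by simp)) (ih fun j hj => h j (by simp [hj]))

lemma SuppIn.det {A : Type*} [AddCommMonoid A] {p : A → (σ →₀ ℕ) → Prop}
    (h0 : p 0 0) (hadd : ∀ a b J K, p a J → p b K → p (a + b) (J + K))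
    {k : ℕ} (a : Fin k → A) (M : Matrix (Fin k) (Fin k) (MvPolynomial σ ℝ))
    (h : ∀ i j, SuppIn (p (a j)) (M i j)) : SuppIn (p (∑ i, a i)) M.det := by
  rw [Matrix.det_apply]
  refine SuppIn.sum _ fun π _ => ?_
  have : SuppIn (p (∑ i, a i)) (∏ i, M (π i) i) := SuppIn.prod h0 hadd _ _ _ fun i _ => h _ _
  rcases Int.units_eq_one_or (Equiv.Perm.sign π) with h | h
  · simpa [h] using this
  · rw [h]; simpa using this.smul (-1)

/-- degree bound -/
def degP (ρ : σ → ℕ) (J : σ →₀ ℕ) : Prop := ∀ l, J l ≤ ρ l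
lemma degP_zero : degP (0 : σ → ℕ) 0 := fun l => by simp
lemma degP_add (a b : σ → ℕ) (J K : σ →₀ ℕ) (h1 : degP a J) (h2 : degP b K) :
    degP (a + b) (J + K) := fun l => by simpa using add_le_add (h1 l) (h2 l)

/-- weighted degree -/
noncomputable def wt (r : σ → ℕ) (J : σ →₀ ℕ) : ℝ := ∑ l, (J l : ℝ) / (r l : ℝ)
lemma wt_add (r : σ → ℕ) (J K : σ →₀ ℕ) : wt r (J + K) = wt r J + wt r K := by
  simp [wt, add_div, Finset.sum_add_distrib]
lemma wt_nonneg (r : σ → ℕ) (J : σ →₀ ℕ) : 0 ≤ wt r J := by unfold wt; positivity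
lemma wt_single (r : σ → ℕ) (a : σ) (j : ℕ) : wt r (Finsupp.single a j) = (j : ℝ) / r a := by
  unfold wt
  rw [Finset.sum_eq_single a]
  · simp
  · intro b _ hb; simp [Finsupp.single_apply, hb.symm]
  · simp

def wtP (r : σ → ℕ) (θ : ℝ) (J : σ →₀ ℕ) : Prop := θ ≤ wt r J
lemma wtP_zero (r : σ → ℕ) : wtP r 0 0 := wt_nonneg _ _
lemma wtP_add (r : σ → ℕ) (a b : ℝ) (J K : σ →₀ ℕ) (h1 : wtP r a J) (h2 : wtP r b K) :
    wtP r (a + b) (J + K) := by unfold wtP at *; rw [wt_add]; linarith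

/-- L1 norm -/
noncomputable def nm (P : MvPolynomial σ ℝ) : ℝ := ∑ J ∈ P.support, |coeff J P|

lemma nm_eq {P : MvPolynomial σ ℝ} {s : Finset (σ →₀ ℕ)} (h : P.support ⊆ s) :
    nm P = ∑ J ∈ s, |coeff J P| := by
  unfold nm
  refine Finset.sum_subset h fun J _ hJ => ?_
  simpa using hJ

lemma nm_nonneg (P : MvPolynomial σ ℝ) : 0 ≤ nm P := by unfold nm; positivity

lemma sum_le_nm (P : MvPolynomial σ ℝ) (s : Finset (σ →₀ ℕ)) : ∑ J ∈ s, |coeff J P| ≤ nm P := by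
  classical
  rw [nm_eq (Finset.subset_union_left (s₂ := s))]
  exact Finset.sum_le_sum_of_subset_of_nonneg Finset.subset_union_right fun _ _ _ => abs_nonneg _

lemma coeff_le_nm (P : MvPolynomial σ ℝ) (J : σ →₀ ℕ) : |coeff J P| ≤ nm P := by
  simpa using sum_le_nm P {J}

lemma nm_add (P Q : MvPolynomial σ ℝ) : nm (P + Q) ≤ nm P + nm Q := by
  classical
  rw [nm_eq (support_add (p := P) (q := Q))]
  calc _ ≤ ∑ J ∈ P.support ∪ Q.support, (|coeff J P| + |coeff J Q|) :=
        Finset.sum_le_sum fun J _ => by rw [coeff_add]; exact abs_add_le _ _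
    _ ≤ _ := by
      rw [Finset.sum_add_distrib]
      exact add_le_add (sum_le_nm _ _) (sum_le_nm _ _)

lemma nm_zero : nm (0 : MvPolynomial σ ℝ) = 0 := by simp [nm]

lemma nm_sum {ι : Type*} (s : Finset ι) (P : ι → MvPolynomial σ ℝ) :
    nm (∑ i ∈ s, P i) ≤ ∑ i ∈ s, nm (P i) := by
  classical
  induction s using Finset.induction_on with
  | empty => simp [nm_zero]
  | insert i s hi ih =>
    rw [Finset.sum_insert hi, Finset.sum_insert hi]
    exact (nm_add _ _).trans (by gcongr)

lemma nm_monomial (J : σ →₀ ℕ) (c : ℝ) : nm (monomial J c) = |c| := by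
  classical
  rw [nm_eq (support_monomial_subset (s := J))]; simp

lemma nm_smul (c : ℝ) (P : MvPolynomial σ ℝ) : nm (c • P) = |c| * nm P := by
  rw [nm_eq (support_smul (f := P)), nm, Finset.mul_sum]
  simp [abs_mul]

lemma nm_mul (P Q : MvPolynomial σ ℝ) : nm (P * Q) ≤ nm P * nm Q := by
  conv_lhs => rw [P.as_sum, Q.as_sum, Finset.sum_mul_sum]
  refine (nm_sum _ _).trans ?_
  rw [nm, nm, Finset.sum_mul_sum]
  refine Finset.sum_le_sum fun J _ => (nm_sum _ _).trans ?_
  refine Finset.sum_le_sum fun K _ => ?_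
  rw [monomial_mul, nm_monomial, abs_mul]

lemma nm_one : nm (1 : MvPolynomial σ ℝ) = 1 := by
  rw [← C_1, C_apply, nm_monomial]; simp

lemma nm_prod {ι : Type*} (s : Finset ι) (P : ι → MvPolynomial σ ℝ) :
    nm (∏ i ∈ s, P i) ≤ ∏ i ∈ s, nm (P i) := by
  classical
  induction s using Finset.induction_on with
  | empty => simp [nm_one]
  | insert i s hi ih =>
    rw [Finset.prod_insert hi, Finset.prod_insert hi]
    exact (nm_mul _ _).trans (mul_le_mul_of_nonneg_left ih (nm_nonneg _))

lemma nm_pow (P : MvPolynomial σ ℝ) (n : ℕ) : nm (P ^ n) ≤ nm P ^ n := by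
  simpa using nm_prod (Finset.range n) fun _ => P

lemma nm_det {k : ℕ} (M : Matrix (Fin k) (Fin k) (MvPolynomial σ ℝ)) (B : ℝ)
    (h : ∀ i j, nm (M i j) ≤ B) : nm M.det ≤ k.factorial * B ^ k := by
  rw [Matrix.det_apply]
  refine (nm_sum _ _).trans ?_
  have : ∀ π ∈ (Finset.univ : Finset (Equiv.Perm (Fin k))),
      nm (Equiv.Perm.sign π • ∏ i, M (π i) i) ≤ B ^ k := by
    intro π _
    have h1 : nm (Equiv.Perm.sign π • ∏ i, M (π i) i) = nm (∏ i, M (π i) i) := by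
      rcases Int.units_eq_one_or (Equiv.Perm.sign π) with h | h
      · simp [h]
      · rw [h]; simpa using nm_smul (-1) (∏ i, M (π i) i)
    rw [h1]
    refine (nm_prod _ _).trans ?_
    calc _ ≤ ∏ i : Fin k, B := Finset.prod_le_prod (fun _ _ => nm_nonneg _) fun i _ => h _ _
      _ = _ := by simp
  refine (Finset.sum_le_sum this).trans ?_
  simp [Fintype.card_perm]

/-- integrality -/
def IsInt (P : MvPolynomial σ ℝ) : Prop := ∀ J, ∃ z : ℤ, coeff J P = z

lemma isInt_iff (P : MvPolynomial σ ℝ) :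
    IsInt P ↔ P ∈ (MvPolynomial.map (σ := σ) (Int.castRingHom ℝ)).range := by
  constructor
  · intro h
    rw [P.as_sum]
    refine Subring.sum_mem _ fun J _ => ?_
    obtain ⟨z, hz⟩ := h J
    exact ⟨monomial J z, by simp [hz]⟩
  · rintro ⟨Q, rfl⟩ J
    exact ⟨coeff J Q, by simp [coeff_map]⟩

lemma IsInt.det {k : ℕ} (M : Matrix (Fin k) (Fin k) (MvPolynomial σ ℝ))
    (h : ∀ i j, IsInt (M i j)) : IsInt M.det := by
  rw [isInt_iff, Matrix.det_apply]
  refine Subring.sum_mem _ fun π _ => ?_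
  have h2 : ∏ i, M (π i) i ∈ (MvPolynomial.map (σ := σ) (Int.castRingHom ℝ)).range :=
    Subring.prod_mem _ fun i _ => (isInt_iff _).1 (h _ _)
  rcases Int.units_eq_one_or (Equiv.Perm.sign π) with h | h
  · simpa [h] using h2
  · rw [h]; simpa using h2

/-- shift -/
noncomputable def shift (β : σ → ℝ) : MvPolynomial σ ℝ →ₐ[ℝ] MvPolynomial σ ℝ :=
  aeval fun l => X l + C (β l)

lemma shift_monomial (β : σ → ℝ) (J : σ →₀ ℕ) (c : ℝ) :
    shift β (monomial J c) = c • ∏ l, (X l + C (β l)) ^ (J l) := by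
  unfold shift
  rw [aeval_monomial, Finsupp.prod_fintype _ _ (by simp), Algebra.smul_def]

lemma degP_XC (b : ℝ) (l : σ) : SuppIn (degP (Pi.single l 1)) (X l + C b : MvPolynomial σ ℝ) := by
  intro J hJ m
  rw [coeff_add, coeff_X, coeff_C] at hJ
  by_cases h1 : Finsupp.single l 1 = J
  · rw [← h1, Finsupp.single_apply, Pi.single_apply]; simp [eq_comm]
  · by_cases h2 : 0 = J
    · simp [← h2]
    · simp [h1, h2] at hJ

lemma degP_XCpow (b : ℝ) (l : σ) (n : ℕ) :
    SuppIn (degP (Pi.single l n)) ((X l + C b) ^ n : MvPolynomial σ ℝ) := by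
  have := SuppIn.prod degP_zero degP_add (Finset.range n) (fun _ => Pi.single l 1)
    (fun _ => (X l + C b : MvPolynomial σ ℝ)) fun _ _ => degP_XC b l
  have h2 : n • (Pi.single l 1 : σ → ℕ) = Pi.single l n := by
    ext m; by_cases h : m = l <;> simp [Pi.single_apply, h]
  simpa [h2] using this

lemma SuppIn.shift {ρ : σ → ℕ} {P : MvPolynomial σ ℝ} (h : SuppIn (degP ρ) P) (β : σ → ℝ) :
    SuppIn (degP ρ) (shift β P) := by
  rw [P.as_sum, map_sum]
  refine SuppIn.sum _ fun J hJ => ?_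
  rw [shift_monomial]
  refine SuppIn.smul _ ?_
  have := SuppIn.prod degP_zero degP_add Finset.univ (fun l => Pi.single l (J l))
    (fun l => ((X l + C (β l)) ^ (J l) : MvPolynomial σ ℝ)) fun l _ => degP_XCpow _ _ _
  refine this.mono fun K hK l => (hK l).trans ?_
  have h3 := h J (by simpa using hJ) l
  simpa [Finset.sum_apply, Pi.single_apply] using h3

lemma nm_shift {ρ : σ → ℕ} {P : MvPolynomial σ ℝ} (h : SuppIn (degP ρ) P) (β : σ → ℝ) (A : ℝ)
    (hA : ∀ l, |β l| ≤ A) : nm (shift β P) ≤ (1 + A) ^ (∑ l, ρ l) * nm P := by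
  have hcard : ∀ l : σ, 0 ≤ A := fun l => (abs_nonneg _).trans (hA l)
  conv_lhs => rw [P.as_sum, map_sum]
  refine (nm_sum _ _).trans ?_
  rw [nm, Finset.mul_sum]
  refine Finset.sum_le_sum fun J hJ => ?_
  rw [shift_monomial, nm_smul, mul_comm]
  refine mul_le_mul_of_nonneg_right ?_ (abs_nonneg _)
  refine (nm_prod _ _).trans ?_
  rw [← Finset.prod_pow_eq_pow_sum]
  refine Finset.prod_le_prod (fun _ _ => nm_nonneg _) fun l _ => (nm_pow _ _).trans ?_
  have h1 : nm (X l + C (β l) : MvPolynomial σ ℝ) ≤ 1 + A := by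
    refine (nm_add _ _).trans ?_
    have e1 : nm (X l : MvPolynomial σ ℝ) = 1 := by rw [X, nm_monomial]; simp
    have e2 : nm (C (β l) : MvPolynomial σ ℝ) = |β l| := by rw [C_apply, nm_monomial]
    rw [e1, e2]; linarith [hA l]
  calc _ ≤ (1 + A) ^ (J l) := pow_le_pow_left₀ (nm_nonneg _) h1 _
    _ ≤ _ := pow_le_pow_right₀ (by linarith [hcard l]) (h J (by simpa using hJ) l)

end RothAux

open Filter Finset MeasureTheory
set_option linter.all false
set_option linter.unusedSectionVars false
set_option linter.unusedSimpArgs false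
namespace RothAux
open MvPolynomial

variable {σ : Type*} [Fintype σ] [DecidableEq σ]

noncomputable def hasse (I : σ →₀ ℕ) : MvPolynomial σ ℝ →ₗ[ℝ] MvPolynomial σ ℝ :=
  (basisMonomials σ ℝ).constr ℝ fun J => monomial (J - I) (∏ l, ((J l).choose (I l) : ℝ))

lemma hasse_monomial (I J : σ →₀ ℕ) (c : ℝ) :
    hasse I (monomial J c) = monomial (J - I) (c * ∏ l, ((J l).choose (I l) : ℝ)) := by
  have h : monomial J c = c • (basisMonomials σ ℝ J) := by
    rw [coe_basisMonomials, smul_monomial]; simp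
  rw [h, map_smul, hasse, Module.Basis.constr_basis, smul_monomial, smul_eq_mul]

lemma coeff_hasse (I K : σ →₀ ℕ) (P : MvPolynomial σ ℝ) :
    coeff K (hasse I P) = (∏ l, ((K l + I l).choose (I l) : ℝ)) * coeff (K + I) P := by
  induction P using MvPolynomial.induction_on' with
  | add p q hp hq => rw [map_add, coeff_add, coeff_add, hp, hq, mul_add]
  | monomial J c =>
    rw [hasse_monomial, coeff_monomial, coeff_monomial]
    by_cases h : J = K + I
    · subst h; simp [mul_comm]
    · rw [if_neg h]
      split_ifs with h2
      · have : ∃ l, J l < I l := by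
          by_contra hc
          push Not at hc
          apply h
          rw [← h2, tsub_add_cancel_of_le]
          exact fun l => hc l
        obtain ⟨l, hl⟩ := this
        rw [Finset.prod_eq_zero (Finset.mem_univ l)]
        · simp
        · simp [Nat.choose_eq_zero_of_lt hl]
      · simp

lemma hasse_zero (P : MvPolynomial σ ℝ) : hasse 0 P = P := by
  ext K; rw [coeff_hasse]; simp

lemma pderiv_hasse (l : σ) (I : σ →₀ ℕ) (P : MvPolynomial σ ℝ) :
    pderiv l (hasse I P) = ((I l : ℝ) + 1) • hasse (I + Finsupp.single l 1) P := by
  ext K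
  rw [coeff_pderiv, coeff_smul, coeff_hasse, coeff_hasse, smul_eq_mul]
  obtain ⟨S1, hS1⟩ : ∃ s : σ →₀ ℕ, s = Finsupp.single l 1 := ⟨_, rfl⟩
  rw [← hS1]
  have e : K + S1 + I = K + (I + S1) := by abel
  rw [e]
  have e0 := fun f : σ → ℝ => (Finset.mul_prod_erase Finset.univ f (Finset.mem_univ l)).symm
  rw [e0, e0]
  have e2 : ∀ m ∈ Finset.univ.erase l, ((((K + S1) m + I m).choose (I m) : ℕ) : ℝ)
      = (((K m + (I + S1) m).choose ((I + S1) m) : ℕ) : ℝ) := by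
    intro m hm
    have : l ≠ m := (Finset.ne_of_mem_erase hm).symm
    simp [hS1, Finsupp.single_apply, this]
  rw [Finset.prod_congr rfl e2]
  have e3 := Nat.choose_succ_right_eq (K l + I l + 1) (I l)
  have e4 : K l + I l + 1 - I l = K l + 1 := by omega
  rw [e4] at e3
  have e5 : ((K l + I l + 1).choose (I l + 1) : ℝ) * ((I l : ℝ) + 1) =
    (K l + I l + 1).choose (I l) * ((K l : ℝ) + 1) := by exact_mod_cast e3
  have e6 : (K + S1) l + I l = K l + I l + 1 := by simp [hS1]; ring
  have e7 : K l + (I + S1) l = K l + I l + 1 := by simp [hS1]; ring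
  have e8 : (I + S1) l = I l + 1 := by simp [hS1]
  rw [e6, e7, e8]
  linear_combination (-(∏ m ∈ Finset.univ.erase l, (((K m + (I + S1) m).choose ((I + S1) m) : ℕ) : ℝ)) * coeff (K + (I + S1)) P) * e5

lemma shift_pderiv (β : σ → ℝ) (l : σ) (P : MvPolynomial σ ℝ) :
    shift β (pderiv l P) = pderiv l (shift β P) := by
  induction P using MvPolynomial.induction_on with
  | C a => simp [shift]
  | add p q hp hq => simp [hp, hq]
  | mul_X p m hp =>
    rw [pderiv_mul, map_add, map_mul, map_mul, map_mul, pderiv_mul, hp]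
    congr 2
    by_cases h : m = l
    · subst h; simp [shift]
    · rw [pderiv_X_of_ne h]; simp [shift, pderiv_X_of_ne h]

lemma shift_hasse (β : σ → ℝ) (I : σ →₀ ℕ) (P : MvPolynomial σ ℝ) :
    shift β (hasse I P) = hasse I (shift β P) := by
  induction h : I.degree generalizing I with
  | zero =>
    have : I = 0 := (Finsupp.degree_eq_zero_iff I).1 h
    subst this; simp [hasse_zero]
  | succ n ih =>
    have hne : I ≠ 0 := by rintro rfl; simp at h
    obtain ⟨l, hl⟩ := Finsupp.ne_iff.1 hne
    have hle : Finsupp.single l 1 ≤ I := by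
      rw [Finsupp.single_le_iff]
      exact Nat.one_le_iff_ne_zero.2 hl
    obtain ⟨I', rfl⟩ : ∃ I', I = I' + Finsupp.single l 1 := ⟨I - Finsupp.single l 1, by
      rw [tsub_add_cancel_of_le hle]⟩
    have h' : I'.degree = n := by simpa [Finsupp.degree_single] using h
    have h1 := congrArg (pderiv l) (ih I' h')
    rw [← shift_pderiv, pderiv_hasse, pderiv_hasse, map_smul] at h1
    have : ((I' l : ℝ) + 1) ≠ 0 := by positivity
    exact (smul_right_inj this).1 h1

lemma SuppIn.hasse {ρ : σ → ℕ} {P : MvPolynomial σ ℝ} (h : SuppIn (degP ρ) P) (I : σ →₀ ℕ) :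
    SuppIn (degP ρ) (hasse I P) := by
  intro K hK l
  rw [coeff_hasse] at hK
  have := h _ (right_ne_zero_of_mul hK) l
  simp at this; omega

lemma nm_hasse {ρ : σ → ℕ} {P : MvPolynomial σ ℝ} (h : SuppIn (degP ρ) P) (I : σ →₀ ℕ) :
    nm (RothAux.hasse I P) ≤ 2 ^ (∑ l, ρ l) * nm P := by
  calc nm (RothAux.hasse I P) ≤ ∑ K ∈ (RothAux.hasse I P).support, 2 ^ (∑ l, ρ l) * |coeff (K + I) P| := by
        refine Finset.sum_le_sum fun K hK => ?_
        rw [mem_support_iff, coeff_hasse] at hK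
        have h1 := h _ (right_ne_zero_of_mul hK)
        rw [coeff_hasse, abs_mul]
        refine mul_le_mul_of_nonneg_right ?_ (abs_nonneg _)
        rw [abs_of_nonneg (by positivity), ← Finset.prod_pow_eq_pow_sum]
        refine Finset.prod_le_prod (fun _ _ => by positivity) fun l _ => ?_
        have h2 := Nat.choose_le_two_pow (K l + I l) (I l)
        have h3 : K l + I l ≤ ρ l := h1 l
        calc ((K l + I l).choose (I l) : ℝ) ≤ 2 ^ (K l + I l) := by exact_mod_cast h2
          _ ≤ _ := pow_le_pow_right₀ (by norm_num) h3
    _ = 2 ^ (∑ l, ρ l) * ∑ J ∈ (RothAux.hasse I P).support.map (addRightEmbedding I), |coeff J P| := by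
        rw [← Finset.mul_sum, Finset.sum_map]; rfl
    _ ≤ _ := by gcongr; exact sum_le_nm _ _

lemma IsInt.hasse {P : MvPolynomial σ ℝ} (h : IsInt P) (I : σ →₀ ℕ) : IsInt (hasse I P) := by
  intro K
  obtain ⟨z, hz⟩ := h (K + I)
  rw [coeff_hasse, hz]
  exact ⟨(∏ l, ((K l + I l).choose (I l) : ℤ)) * z, by push_cast; rfl⟩

/-- index lower bound -/
def IndGE (r : σ → ℕ) (β : σ → ℝ) (θ : ℝ) (P : MvPolynomial σ ℝ) : Prop :=
  SuppIn (wtP r θ) (shift β P)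

lemma IndGE.hasse {r : σ → ℕ} {β : σ → ℝ} {θ : ℝ} {P : MvPolynomial σ ℝ} (h : IndGE r β θ P)
    (I : σ →₀ ℕ) : IndGE r β (θ - wt r I) (hasse I P) := by
  intro K hK
  rw [shift_hasse, coeff_hasse] at hK
  have := h _ (right_ne_zero_of_mul hK)
  unfold wtP at *
  rw [wt_add] at this; linarith

lemma IndGE.mono {r : σ → ℕ} {β : σ → ℝ} {θ θ' : ℝ} {P : MvPolynomial σ ℝ} (h : IndGE r β θ P)
    (hle : θ' ≤ θ) : IndGE r β θ' P := SuppIn.mono h fun J hJ => le_trans hle hJ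

lemma IndGE.zero {r : σ → ℕ} {β : σ → ℝ} {P : MvPolynomial σ ℝ} : IndGE r β 0 P :=
  fun J _ => wt_nonneg _ _

/-- abstract Wronskian lemma -/
theorem wronsk {R : Type*} [CommRing R] [IsDomain R] [Algebra ℝ R] {ι : Type*}
    (d : ι → Derivation ℝ R R)
    (hconst : ∀ u v : R, u ≠ 0 → (∀ l, u * d l v = v * d l u) → ∃ c : ℝ, v = c • u) :
    ∀ (k : ℕ) (φ : Fin k → R), LinearIndependent ℝ φ → ∀ u : Fin k → R,
      (∀ L : List ι, L.length < k → ∑ s, u s * (L.foldr (fun l x => d l x) (φ s)) = 0) → u = 0 := by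
  intro k
  induction k with
  | zero => intro φ _ u _; exact Subsingleton.elim _ _
  | succ k ih =>
    intro φ hφ u hu
    by_contra hne
    obtain ⟨s0, hs0⟩ := Function.ne_iff.1 hne
    simp only [Pi.zero_apply] at hs0
    have key : ∀ l, ∀ s, u s0 * d l (u s) = u s * d l (u s0) := by
      intro l
      have h1 := ih (φ ∘ s0.succAbove) (hφ.comp _ Fin.succAbove_right_injective)
        (fun s => u s0 * d l (u (s0.succAbove s)) - u (s0.succAbove s) * d l (u s0)) (by
          intro L hL
          have e1 := hu L (by omega)
          have e2 := hu (l :: L) (by simpa using hL)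
          have e3 := congrArg (d l) e1
          rw [map_sum, map_zero] at e3
          simp only [Derivation.leibniz, smul_eq_mul, Finset.sum_add_distrib] at e3
          simp only [List.foldr_cons] at e2
          rw [e2, zero_add] at e3
          have e4 : ∑ s, (u s0 * d l (u s) - u s * d l (u s0)) *
              (L.foldr (fun l x => d l x) (φ s)) = 0 := by
            have : ∀ s, (u s0 * d l (u s) - u s * d l (u s0)) *
              (L.foldr (fun l x => d l x) (φ s)) =
              u s0 * ((L.foldr (fun l x => d l x) (φ s)) * d l (u s)) -
              d l (u s0) * (u s * (L.foldr (fun l x => d l x) (φ s))) := fun s => by ring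
            simp only [this, Finset.sum_sub_distrib, ← Finset.mul_sum, e1, e3]; simp
          rw [Fin.sum_univ_succAbove _ s0] at e4
          simpa using e4)
      intro s
      rcases Fin.eq_self_or_eq_succAbove s0 s with rfl | ⟨s', rfl⟩
      · rfl
      · have := congrFun h1 s'
        simp only [Pi.zero_apply] at this
        exact sub_eq_zero.1 this
    choose c hc using fun s => hconst (u s0) (u s) hs0 (fun l => key l s)
    have e1 := hu [] (by simp)
    simp only [List.foldr_nil] at e1
    have e2 : u s0 * ∑ s, c s • φ s = 0 := by
      rw [← e1, Finset.mul_sum]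
      refine Finset.sum_congr rfl fun s _ => ?_
      conv_rhs => rw [hc s]
      rw [mul_smul_comm, smul_mul_assoc]
    have e3 := (mul_eq_zero.1 e2).resolve_left hs0
    have e4 := Fintype.linearIndependent_iff.1 hφ c e3 s0
    apply hs0
    rw [hc s0, e4, zero_smul]

lemma mv_const (u v : MvPolynomial σ ℝ) (hu : u ≠ 0)
    (h : ∀ l, u * pderiv l v = v * pderiv l u) : ∃ c : ℝ, v = c • u := by
  obtain ⟨a, ha⟩ : ∃ a, eval a u ≠ 0 := by
    by_contra hc; push Not at hc
    exact hu (MvPolynomial.funext fun a => by simp [hc])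
  refine ⟨eval a v / eval a u, ?_⟩
  set c := eval a v / eval a u
  have hev : ∀ P : MvPolynomial σ ℝ, coeff 0 (shift a P) = eval a P := by
    intro P
    rw [← constantCoeff_eq]
    induction P using MvPolynomial.induction_on with
    | C b => simp [shift]
    | add p q hp hq => simp [hp, hq]
    | mul_X p m hp => rw [map_mul, map_mul, hp, map_mul]; simp [shift]
  set U := shift a u
  set W := shift a (v - c • u) with hW
  have hU0 : coeff 0 U ≠ 0 := by rw [hev]; exact ha
  have hW0 : coeff 0 W = 0 := by
    rw [hev]; simp [c]; field_simp; simp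
  have hrel : ∀ l, U * pderiv l W = W * pderiv l U := by
    intro l
    rw [← shift_pderiv, ← shift_pderiv, ← map_mul, ← map_mul]
    congr 1
    rw [map_sub, Derivation.map_smul, mul_sub, sub_mul, h l, mul_smul_comm, smul_mul_assoc]
  have hWz : W = 0 := by
    have : ∀ n : ℕ, ∀ J : σ →₀ ℕ, J.degree = n → coeff J W = 0 := by
      intro n
      induction n using Nat.strong_induction_on with
      | _ n ih =>
        intro J hJ
        by_cases hJ0 : J = 0
        · rw [hJ0, hW0]
        obtain ⟨l, hl⟩ := Finsupp.ne_iff.1 hJ0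
        have hle : Finsupp.single l 1 ≤ J := by
          rw [Finsupp.single_le_iff]
          exact Nat.one_le_iff_ne_zero.2 hl
        obtain ⟨I, rfl⟩ : ∃ I', J = I' + Finsupp.single l 1 := ⟨J - Finsupp.single l 1, by
          rw [tsub_add_cancel_of_le hle]⟩
        have hd : I.degree + 1 = n := by simpa [Finsupp.degree_single] using hJ
        have h1 := congrArg (coeff I) (hrel l)
        rw [coeff_mul, coeff_mul] at h1
        rw [Finset.sum_eq_zero (s := HasAntidiagonal.antidiagonal I) (f := fun x => coeff x.1 W * _)] at h1
        · rw [Finset.sum_eq_single (0, I)] at h1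
          · rw [coeff_pderiv] at h1
            have h2 := (mul_eq_zero.1 h1).resolve_left hU0
            have : ((I l : ℝ) + 1) ≠ 0 := by positivity
            exact (mul_eq_zero.1 h2).resolve_right this
          · rintro ⟨A, B⟩ hAB hne
            have hs : A + B = I := HasAntidiagonal.mem_antidiagonal.1 hAB
            have hA : A ≠ 0 := by
              rintro rfl; apply hne; simp at hs; simp [hs]
            have hA' : A.degree ≠ 0 := fun h0 => hA ((Finsupp.degree_eq_zero_iff A).1 h0)
            have hs' : A.degree + B.degree = I.degree := by rw [← hs, map_add]
            simp only
            rw [coeff_pderiv, ih (B.degree + 1) (by omega) _ (by simp [Finsupp.degree_single])]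
            simp
          · intro hc; exact absurd (HasAntidiagonal.mem_antidiagonal.2 (by simp)) hc
        · rintro ⟨A, B⟩ hAB
          have hs : A + B = I := HasAntidiagonal.mem_antidiagonal.1 hAB
          have hs' : A.degree + B.degree = I.degree := by rw [← hs, map_add]
          simp only
          rw [ih A.degree (by omega) A rfl, zero_mul]
    ext J
    rw [this _ J rfl]; simp
  have hinj : Function.LeftInverse (shift (fun l => -a l)) (shift a) := by
    intro P
    rw [← AlgHom.comp_apply]
    have : (shift (fun l => -a l)).comp (shift a) = AlgHom.id ℝ _ := by
      ext l; simp [shift]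
    rw [this]; simp
  have := hinj (v - c • u)
  rw [← hW, hWz, map_zero] at this
  exact (sub_eq_zero.1 this.symm)

lemma poly_const (u v : Polynomial ℝ) (hu : u ≠ 0)
    (h : u * Polynomial.derivative v = v * Polynomial.derivative u) : ∃ c : ℝ, v = c • u := by
  have main : ∀ w : Polynomial ℝ, w ≠ 0 → u * Polynomial.derivative w = w * Polynomial.derivative u →
      w.natDegree = u.natDegree := by
    intro w hw hrel
    have c1 : ∀ p q : Polynomial ℝ, (p * (Polynomial.X * Polynomial.derivative q)).coeff (p.natDegree + q.natDegree)
        = p.leadingCoeff * (q.leadingCoeff * q.natDegree) := by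
      intro p q
      rw [Polynomial.coeff_mul_add_eq_of_natDegree_le le_rfl]
      · congr 1
        cases hq : q.natDegree with
        | zero => simp
        | succ n => rw [Polynomial.coeff_X_mul, Polynomial.coeff_derivative, Polynomial.leadingCoeff, hq]; push_cast; ring
      · by_cases hq : q.natDegree = 0
        · rw [Polynomial.derivative_of_natDegree_zero hq]; simp
        · refine Polynomial.natDegree_mul_le.trans ?_
          have := Polynomial.natDegree_derivative_lt hq
          rw [Polynomial.natDegree_X]; omega
    have h1 := c1 u w
    have h2 := c1 w u
    have e : u * (Polynomial.X * Polynomial.derivative w) = w * (Polynomial.X * Polynomial.derivative u) := by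
      linear_combination Polynomial.X * hrel
    rw [e, add_comm, h2] at h1
    have hlu : u.leadingCoeff ≠ 0 := by simpa using hu
    have hlw : w.leadingCoeff ≠ 0 := by simpa using hw
    have : (u.leadingCoeff * w.leadingCoeff) * ((u.natDegree : ℝ) - w.natDegree) = 0 := by linear_combination h1
    have := (mul_eq_zero.1 this).resolve_left (mul_ne_zero hlu hlw)
    have : (w.natDegree : ℝ) = u.natDegree := by linarith
    exact_mod_cast this
  by_cases hv : v = 0
  · exact ⟨0, by simp [hv]⟩
  refine ⟨v.leadingCoeff / u.leadingCoeff, ?_⟩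
  set c := v.leadingCoeff / u.leadingCoeff
  have hlu : u.leadingCoeff ≠ 0 := by simpa using hu
  by_contra hne
  have hw : v - c • u ≠ 0 := sub_ne_zero.2 hne
  have hd := main v hv h
  have hdw := main (v - c • u) hw (by
    rw [Polynomial.derivative_sub, Polynomial.derivative_smul, mul_sub, sub_mul, h, mul_smul_comm, smul_mul_assoc])
  have : (v - c • u).leadingCoeff = 0 := by
    rw [Polynomial.leadingCoeff, hdw, Polynomial.coeff_sub, Polynomial.coeff_smul, ← Polynomial.leadingCoeff, ← hd,
      ← Polynomial.leadingCoeff]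
    simp [c]; field_simp; simp
  exact hw (by simpa using this)

lemma exists_rows {R : Type*} [CommRing R] [IsDomain R] {ι : Type*} {k : ℕ} (M : ι → Fin k → R)
    (h : ∀ u : Fin k → R, (∀ i, ∑ s, u s * M i s = 0) → u = 0) :
    ∃ f : Fin k → ι, (Matrix.of fun i s => M (f i) s).det ≠ 0 := by
  let K := FractionRing R
  let v : ι → Fin k → K := fun i s => algebraMap R K (M i s)
  have hspan : Submodule.span K (Set.range v) = ⊤ := by
    by_contra hne
    obtain ⟨f, hf, hle⟩ := Submodule.exists_le_ker_of_lt_top _ (lt_top_iff_ne_top.2 hne)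
    let c : Fin k → K := fun s => f (Pi.single s 1)
    have hfc : ∀ x, f x = ∑ s, x s * c s := by
      intro x
      conv_lhs => rw [← Finset.univ_sum_single x]
      rw [map_sum]
      refine Finset.sum_congr rfl fun s _ => ?_
      have : (Pi.single s (x s) : Fin k → K) = x s • Pi.single s 1 := by
        rw [← Pi.single_smul]; simp
      rw [this, map_smul, smul_eq_mul]
    obtain ⟨b, hb⟩ := IsLocalization.exist_integer_multiples_of_finite (nonZeroDivisors R) c
    choose u hu using hb
    have hu0 : u = 0 := by
      apply h
      intro i
      apply IsFractionRing.injective R K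
      rw [map_zero, map_sum]
      have h1 : f (v i) = 0 := hle (Submodule.subset_span ⟨i, rfl⟩)
      rw [hfc] at h1
      calc _ = algebraMap R K b * ∑ s, v i s * c s := by
            rw [Finset.mul_sum]
            refine Finset.sum_congr rfl fun s _ => ?_
            rw [map_mul, hu s, Algebra.smul_def]
            simp only [v]
            ring
        _ = 0 := by rw [h1, mul_zero]
    have hc0 : ∀ s, c s = 0 := by
      intro s
      have := hu s
      rw [hu0] at this
      simp only [Pi.zero_apply, map_zero] at this
      have hb0 : algebraMap R K b ≠ 0 := by
        rw [Ne, IsFractionRing.to_map_eq_zero_iff]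
        exact nonZeroDivisors.coe_ne_zero b
      rw [Algebra.smul_def] at this
      exact (mul_eq_zero.1 this.symm).resolve_left hb0
    apply hf
    ext s
    simpa using hc0 s
  obtain ⟨κ, a, ha, hsp, hli⟩ := exists_linearIndependent' K v
  rw [hspan] at hsp
  let b := Module.Basis.mk hli hsp.ge
  let e := b.indexEquiv (Pi.basisFun K (Fin k))
  refine ⟨a ∘ e.symm, ?_⟩
  have hli2 : LinearIndependent K (v ∘ a ∘ e.symm) := hli.comp _ e.symm.injective
  have h3 : IsUnit (Matrix.of (v ∘ a ∘ e.symm)) := Matrix.linearIndependent_rows_iff_isUnit.1 hli2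
  have h4 := (Matrix.isUnit_iff_isUnit_det _).1 h3
  intro h0
  apply h4.ne_zero
  have := congrArg (algebraMap R K) h0
  rw [map_zero, RingHom.map_det] at this
  rw [← this]
  rfl

end RothAux

open Filter Finset MeasureTheory
set_option linter.all false
set_option linter.unusedSectionVars false
set_option linter.unusedSimpArgs false
namespace RothAux
open MvPolynomial

variable {σ : Type*} [Fintype σ] [DecidableEq σ]

noncomputable def iot (a : σ) : Polynomial ℝ →ₐ[ℝ] MvPolynomial σ ℝ := Polynomial.aeval (X a)

lemma iot_monomial (a : σ) (n : ℕ) (c : ℝ) :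
    iot a (Polynomial.monomial n c) = monomial (Finsupp.single a n) c := by
  rw [iot, Polynomial.aeval_monomial, X_pow_eq_monomial, algebraMap_eq, C_mul_monomial, mul_one]

lemma coeff_mul_iot (a : σ) (U : MvPolynomial σ ℝ) (V : Polynomial ℝ)
    (hU : SuppIn (fun J => J a = 0) U) (J : σ →₀ ℕ) (hJ : J a = 0) (i : ℕ) :
    coeff (J + Finsupp.single a i) (U * iot a V) = coeff J U * V.coeff i := by
  induction V using Polynomial.induction_on' with
  | add p q hp hq => rw [map_add, mul_add, coeff_add, hp, hq, Polynomial.coeff_add, mul_add]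
  | monomial n c =>
    rw [iot_monomial, coeff_mul_monomial', Polynomial.coeff_monomial]
    by_cases h : n = i
    · subst h; simp
    · rw [if_neg h, mul_zero]
      split_ifs with h2
      · rw [Finsupp.single_le_iff] at h2
        simp [hJ] at h2
        by_contra hne
        have := hU _ (left_ne_zero_of_mul hne)
        simp [hJ] at this
        omega
      · rfl

lemma decomp_erase (a : σ) (K : σ →₀ ℕ) : K = K.erase a + Finsupp.single a (K a) := by
  rw [Finsupp.erase_add_single]

lemma hasse_mul_iot (a : σ) (φ : MvPolynomial σ ℝ) (ψ : Polynomial ℝ)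
    (hφ : SuppIn (fun J => J a = 0) φ) (I : σ →₀ ℕ) (hI : I a = 0) (j : ℕ) :
    hasse (I + Finsupp.single a j) (φ * iot a ψ) = hasse I φ * iot a (Polynomial.hasseDeriv j ψ) := by
  ext K
  obtain ⟨K', i, hK', rfl⟩ : ∃ K' : σ →₀ ℕ, ∃ i, K' a = 0 ∧ K = K' + Finsupp.single a i :=
    ⟨K.erase a, K a, by simp, decomp_erase a K⟩
  have hs : SuppIn (fun J => J a = 0) (hasse I φ) := by
    intro L hL
    rw [coeff_hasse] at hL
    have := hφ _ (right_ne_zero_of_mul hL)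
    simp at this; exact this.1
  rw [coeff_mul_iot a _ _ hs _ hK', coeff_hasse, coeff_hasse]
  have e : K' + Finsupp.single a i + (I + Finsupp.single a j) = (K' + I) + Finsupp.single a (i + j) := by
    rw [Finsupp.single_add]; abel
  rw [e, coeff_mul_iot a _ _ hφ _ (by simp [hK', hI]), Polynomial.hasseDeriv_coeff]
  have e0 := fun f : σ → ℝ => (Finset.mul_prod_erase Finset.univ f (Finset.mem_univ a)).symm
  rw [e0, e0]
  have e2 : ∏ m ∈ Finset.univ.erase a, ((((K' + Finsupp.single a i : σ →₀ ℕ) m +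
        (I + Finsupp.single a j : σ →₀ ℕ) m).choose ((I + Finsupp.single a j : σ →₀ ℕ) m) : ℕ) : ℝ)
      = ∏ m ∈ Finset.univ.erase a, (((K' m + I m).choose (I m) : ℕ) : ℝ) := by
    refine Finset.prod_congr rfl fun m hm => ?_
    have : a ≠ m := (Finset.ne_of_mem_erase hm).symm
    simp [Finsupp.single_apply, this]
  rw [e2]
  simp [hK', hI]
  ring

lemma slices (a : σ) (ρ : σ → ℕ) (P : MvPolynomial σ ℝ) (hP : SuppIn (degP ρ) P) :
    ∃ p : Fin (ρ a + 1) → MvPolynomial σ ℝ, (∀ i, SuppIn (degP (Function.update ρ a 0)) (p i)) ∧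
      P = ∑ i, p i * iot a (Polynomial.X ^ (i : ℕ)) := by
  refine ⟨fun i : Fin (ρ a + 1) => ∑ J ∈ P.support with J a = (i : ℕ), monomial (J.erase a) (coeff J P), ?_, ?_⟩
  · intro i
    refine SuppIn.sum _ fun J hJ => ?_
    intro K hK l
    rw [coeff_monomial] at hK
    have hJK : J.erase a = K := by by_contra hc; simp [hc] at hK
    rw [← hJK]
    by_cases h : l = a
    · subst h; simp
    · rw [Finsupp.erase_ne h, Function.update_of_ne h]
      exact hP J (by simpa using (Finset.mem_filter.1 hJ).1) l
  · conv_lhs => rw [P.as_sum]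
    have hmaps : ∀ J ∈ P.support, (⟨min (J a) (ρ a), by omega⟩ : Fin (ρ a + 1)) ∈ Finset.univ := by simp
    rw [← Finset.sum_fiberwise_of_maps_to hmaps]
    refine Finset.sum_congr rfl fun i _ => ?_
    rw [Finset.sum_mul]
    have hf : (P.support.filter fun J => (⟨min (J a) (ρ a), by omega⟩ : Fin (ρ a + 1)) = i)
        = P.support.filter fun J => J a = (i : ℕ) := by
      refine Finset.filter_congr fun J hJ => ?_
      have := hP J (by simpa using hJ) a
      rw [Fin.ext_iff]; simp [min_eq_left this]
    rw [hf]
    refine Finset.sum_congr rfl fun J hJ => ?_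
    have h1 : J a = i := (Finset.mem_filter.1 hJ).2
    rw [← Polynomial.monomial_one_right_eq_X_pow, iot_monomial, monomial_mul, mul_one, ← h1, Finsupp.erase_add_single]

lemma rank_decomp (a : σ) (ρ : σ → ℕ) (P : MvPolynomial σ ℝ) (hP : SuppIn (degP ρ) P) (hP0 : P ≠ 0) :
    ∃ k : ℕ, 1 ≤ k ∧ k ≤ ρ a + 1 ∧ ∃ φ : Fin k → MvPolynomial σ ℝ, ∃ ψ : Fin k → Polynomial ℝ,
      LinearIndependent ℝ φ ∧ LinearIndependent ℝ ψ ∧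
      (∀ s, SuppIn (degP (Function.update ρ a 0)) (φ s)) ∧ P = ∑ s, φ s * iot a (ψ s) := by
  obtain ⟨p, hp, hsum⟩ := slices a ρ P hP
  obtain ⟨κ, f, hf, hsp, hli⟩ := exists_linearIndependent' ℝ p
  have : Fintype κ := Fintype.ofInjective f hf
  let e := Fintype.equivFin κ
  let g : Fin (Fintype.card κ) → Fin (ρ a + 1) := f ∘ e.symm
  have hli2 : LinearIndependent ℝ (p ∘ g) := hli.comp _ e.symm.injective
  have hr : Set.range (p ∘ g) = Set.range (p ∘ f) := by
    have : p ∘ g = (p ∘ f) ∘ e.symm := rfl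
    rw [this, e.symm.surjective.range_comp]
  have hmem : ∀ i, ∃ M : Fin (Fintype.card κ) → ℝ, ∑ s, M s • (p ∘ g) s = p i := by
    intro i
    rw [← Submodule.mem_span_range_iff_exists_fun, hr, hsp]
    exact Submodule.subset_span ⟨i, rfl⟩
  choose M hM using hmem
  refine ⟨Fintype.card κ, ?_, ?_, p ∘ g, fun s => ∑ i : Fin (ρ a + 1), M i s • Polynomial.X ^ (i : ℕ), hli2, ?_, fun s => hp _, ?_⟩
  · by_contra hc
    have h0 : Fintype.card κ = 0 := by omega
    have hE := Fintype.card_eq_zero_iff.1 h0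
    have hE2 : IsEmpty (Fin (Fintype.card κ)) := by rw [h0]; infer_instance
    apply hP0
    rw [hsum]
    refine Finset.sum_eq_zero fun i _ => ?_
    rw [← hM i, Finset.univ_eq_empty, Finset.sum_empty, zero_mul]
  · simpa using Fintype.card_le_of_injective f hf
  · rw [Fintype.linearIndependent_iff]
    intro c hc s'
    have h1 : ∀ s, M (g s') s = if s = s' then 1 else 0 := by
      have h2 := hM (g s')
      have h3 : ∑ s, (M (g s') s - if s = s' then 1 else 0) • (p ∘ g) s = 0 := by
        simp only [sub_smul, Finset.sum_sub_distrib, h2]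
        simp
      intro s
      exact sub_eq_zero.1 (Fintype.linearIndependent_iff.1 hli2 _ h3 s)
    have h4 := congrArg (fun q => Polynomial.coeff q (g s' : ℕ)) hc
    simp only [Polynomial.finset_sum_coeff, Polynomial.coeff_smul, Polynomial.coeff_zero, Polynomial.coeff_X_pow, smul_eq_mul] at h4
    have h5 : ∀ s, (∑ i : Fin (ρ a + 1), M i s * (if (g s' : ℕ) = (i : ℕ) then (1:ℝ) else 0)) = M (g s') s := by
      intro s
      rw [Finset.sum_eq_single (g s')]
      · simp
      · intro b _ hb
        rw [if_neg, mul_zero]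
        intro hh; exact hb (Fin.ext hh.symm)
      · simp
    simp only [h5, h1] at h4
    simpa using h4
  · conv_lhs => rw [hsum]
    simp only [map_sum, map_smul, Finset.mul_sum]
    rw [Finset.sum_comm]
    refine Finset.sum_congr rfl fun i _ => ?_
    rw [← hM i, Finset.sum_mul]
    refine Finset.sum_congr rfl fun s _ => ?_
    rw [smul_mul_assoc, mul_smul_comm]

lemma foldr_pderiv (L : List σ) : ∃ c : ℝ, ∃ I : σ →₀ ℕ, I.degree = L.length ∧
    ∀ P : MvPolynomial σ ℝ, L.foldr (fun l x => pderiv l x) P = c • hasse I P := by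
  induction L with
  | nil => exact ⟨1, 0, by simp, fun P => by simp [hasse_zero]⟩
  | cons l L ih =>
    obtain ⟨c, I, hI, h⟩ := ih
    refine ⟨c * (I l + 1), I + Finsupp.single l 1, by simp [hI, Finsupp.degree_single], fun P => ?_⟩
    rw [List.foldr_cons, h, Derivation.map_smul, pderiv_hasse, smul_smul]

lemma mv_rows {k : ℕ} (φ : Fin k → MvPolynomial σ ℝ) (hφ : LinearIndependent ℝ φ) :
    ∃ I : Fin k → (σ →₀ ℕ), (∀ i, (I i).degree < k) ∧
      (Matrix.of fun i s => hasse (I i) (φ s)).det ≠ 0 := by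
  obtain ⟨f, hf⟩ := exists_rows (ι := {I : σ →₀ ℕ // I.degree < k}) (fun I s => hasse I.1 (φ s)) (by
    intro u hu
    refine wronsk (fun l => pderiv l) mv_const k φ hφ u fun L hL => ?_
    obtain ⟨c, I, hI, h⟩ := foldr_pderiv L
    have := hu ⟨I, by omega⟩
    simp only at this
    simp only [h, mul_smul_comm, ← Finset.smul_sum, this, smul_zero])
  exact ⟨fun i => (f i).1, fun i => (f i).2, hf⟩

lemma poly_rows {k : ℕ} (ψ : Fin k → Polynomial ℝ) (hψ : LinearIndependent ℝ ψ) :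
    (Matrix.of fun (j : Fin k) s => Polynomial.hasseDeriv j (ψ s)).det ≠ 0 := by
  intro h0
  obtain ⟨u, hu0, hu⟩ := Matrix.exists_mulVec_eq_zero_iff.2 h0
  apply hu0
  refine wronsk (fun _ : Unit => Polynomial.derivative') (fun u v hu h => poly_const u v hu (by simpa using h ())) k ψ hψ u fun L hL => ?_
  have h1 : ∀ P : Polynomial ℝ, L.foldr (fun _ x => Polynomial.derivative' x) P = (L.length.factorial : ℝ) • Polynomial.hasseDeriv L.length P := by
    intro P
    have e1 : L.foldr (fun _ x => Polynomial.derivative' x) P = Polynomial.derivative^[L.length] P := by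
      clear hL
      induction L with
      | nil => simp
      | cons l L ih => rw [List.foldr_cons, ih, List.length_cons, Function.iterate_succ_apply']; rfl
    rw [e1, ← Polynomial.factorial_smul_hasseDeriv]
    simp [Nat.cast_smul_eq_nsmul]
  have h2 := congrFun hu ⟨L.length, hL⟩
  simp only [Matrix.mulVec, dotProduct, Matrix.of_apply, Pi.zero_apply] at h2
  simp only [h1, mul_smul_comm, ← Finset.smul_sum]
  rw [Finset.sum_congr rfl fun s _ => mul_comm _ _, h2, smul_zero]

lemma lin_dvd (p q : ℤ) (hq : q ≠ 0) (hpq : IsCoprime p q) (f : Polynomial ℤ)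
    (hf : (f.map (Int.castRingHom ℝ)).eval ((p : ℝ) / q) = 0) :
    (Polynomial.C q * Polynomial.X - Polynomial.C p) ∣ f := by
  by_cases hf0 : f = 0
  · simp [hf0]
  have hprim : (Polynomial.C q * Polynomial.X - Polynomial.C p).IsPrimitive := by
    intro r hr
    rw [Polynomial.C_dvd_iff_dvd_coeff] at hr
    have h0 := hr 0
    have h1 := hr 1
    simp only [Polynomial.coeff_sub, Polynomial.coeff_C_mul, Polynomial.coeff_X_zero, Polynomial.coeff_X_one, Polynomial.coeff_C_zero, Polynomial.coeff_C_succ, mul_zero, mul_one, sub_zero, zero_sub, dvd_neg, Polynomial.coeff_C_ne_zero one_ne_zero] at h0 h1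
    exact hpq.isUnit_of_dvd' h0 h1
  rw [Polynomial.IsPrimitive.Int.dvd_iff_map_cast_dvd_map_cast _ _ hprim]
  have hq' : (q : ℚ) ≠ 0 := by exact_mod_cast hq
  have hfac : (Polynomial.C q * Polynomial.X - Polynomial.C p).map (Int.castRingHom ℚ)
      = Polynomial.C (q : ℚ) * (Polynomial.X - Polynomial.C ((p : ℚ) / q)) := by
    simp only [Polynomial.map_sub, Polynomial.map_mul, Polynomial.map_C, Polynomial.map_X, mul_sub, ← Polynomial.C_mul]
    congr 2
    simp; field_simp
  rw [hfac]
  have hu : IsUnit (Polynomial.C (q : ℚ)) := Polynomial.isUnit_C.2 (isUnit_iff_ne_zero.2 hq')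
  rw [hu.mul_left_dvd, Polynomial.dvd_iff_isRoot, Polynomial.IsRoot]
  have h2 : (f.map (Int.castRingHom ℚ)).eval ((p : ℚ) / q) = 0 := by
    have h3 : (f.map (Int.castRingHom ℝ)) = (f.map (Int.castRingHom ℚ)).map (algebraMap ℚ ℝ) := by
      rw [Polynomial.map_map]; congr 1
    have h4 : ((p : ℝ) / q) = algebraMap ℚ ℝ ((p : ℚ) / q) := by simp
    rw [h3, h4, Polynomial.eval_map_apply] at hf
    simpa using hf
  exact h2

lemma uni_int (p q : ℤ) (hq : 1 ≤ q) (hpq : IsCoprime p q) : ∀ (n : ℕ) (f : Polynomial ℤ),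
    f.natDegree ≤ n → f ≠ 0 → ∃ j : ℕ,
      (Polynomial.taylor ((p : ℝ) / q) (f.map (Int.castRingHom ℝ))).coeff j ≠ 0 ∧ q ^ j ∣ f.leadingCoeff := by
  intro n
  have hq0 : q ≠ 0 := by omega
  have hqr : (q : ℝ) ≠ 0 := by exact_mod_cast hq0
  induction n with
  | zero =>
    intro f hf hf0
    refine ⟨0, ?_, by simp⟩
    rw [Polynomial.taylor_coeff_zero]
    rw [Polynomial.eq_C_of_natDegree_eq_zero (Nat.le_zero.1 hf)] at hf0 ⊢
    simpa using hf0
  | succ n ih =>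
    intro f hf hf0
    by_cases hev : (f.map (Int.castRingHom ℝ)).eval ((p : ℝ) / q) = 0
    · obtain ⟨g, rfl⟩ := lin_dvd p q hq0 hpq f hev
      have hg0 : g ≠ 0 := right_ne_zero_of_mul hf0
      have hl0 : (Polynomial.C q * Polynomial.X - Polynomial.C p) ≠ 0 := left_ne_zero_of_mul hf0
      have hd : (Polynomial.C q * Polynomial.X - Polynomial.C p).natDegree = 1 := by
        rw [sub_eq_add_neg, ← Polynomial.C_neg]; exact Polynomial.natDegree_linear hq0
      have hlc : (Polynomial.C q * Polynomial.X - Polynomial.C p).leadingCoeff = q := by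
        rw [sub_eq_add_neg, ← Polynomial.C_neg]; exact Polynomial.leadingCoeff_linear hq0
      rw [Polynomial.natDegree_mul hl0 hg0, hd] at hf
      obtain ⟨j, hj, hdvd⟩ := ih g (by omega) hg0
      refine ⟨j + 1, ?_, ?_⟩
      · rw [Polynomial.map_mul, Polynomial.taylor_mul]
        have : Polynomial.taylor ((p : ℝ) / q) ((Polynomial.C q * Polynomial.X - Polynomial.C p).map (Int.castRingHom ℝ)) = Polynomial.C (q : ℝ) * Polynomial.X := by
          simp only [Polynomial.map_sub, Polynomial.map_mul, Polynomial.map_C, Polynomial.map_X, map_sub, Polynomial.taylor_mul, Polynomial.taylor_X, Polynomial.taylor_C]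
          rw [mul_add, ← Polynomial.C_mul]
          rw [show (Int.castRingHom ℝ) q = (q : ℝ) from rfl, show (Int.castRingHom ℝ) p = (p : ℝ) from rfl, mul_div_cancel₀ _ hqr]
          ring
        rw [this, mul_assoc, Polynomial.coeff_C_mul, Polynomial.coeff_X_mul]
        exact mul_ne_zero hqr hj
      · rw [Polynomial.leadingCoeff_mul, hlc, pow_succ, mul_comm]
        exact mul_dvd_mul_left _ hdvd
    · exact ⟨0, by rwa [Polynomial.taylor_coeff_zero], by simp⟩

lemma uni (p q : ℤ) (hq : 1 ≤ q) (hpq : IsCoprime p q) (V : Polynomial ℝ) (hV : V ≠ 0)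
    (hint : ∀ i, ∃ z : ℤ, V.coeff i = z) :
    ∃ j : ℕ, (Polynomial.taylor ((p : ℝ) / q) V).coeff j ≠ 0 ∧ (q : ℝ) ^ j ≤ |V.leadingCoeff| := by
  have : V ∈ Polynomial.lifts (Int.castRingHom ℝ) := by
    rw [Polynomial.lifts_iff_coeff_lifts]
    intro i; obtain ⟨z, hz⟩ := hint i; exact ⟨z, by simp [hz]⟩
  obtain ⟨f, rfl⟩ := (Polynomial.mem_lifts _).1 this
  have hinj : Function.Injective (Int.castRingHom ℝ) := Int.cast_injective
  have hf0 : f ≠ 0 := by rintro rfl; simp at hV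
  obtain ⟨j, hj, hd⟩ := uni_int p q hq hpq _ f le_rfl hf0
  refine ⟨j, hj, ?_⟩
  rw [Polynomial.leadingCoeff_map_of_injective hinj]
  have h1 : f.leadingCoeff ≠ 0 := by simpa using hf0
  have := Int.le_of_dvd (abs_pos.2 h1) ((dvd_abs _ _).2 hd)
  simp
  exact_mod_cast this

lemma sum_bound (θ : ℝ) (h0 : 0 ≤ θ) (h1 : θ ≤ 1) (r k : ℕ) (hr : 1 ≤ r) (hk : k ≤ r + 1) :
    k * θ ^ 2 / 8 ≤ ∑ j : Fin k, max 0 (θ - (j : ℕ) / r) := by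
  have hrr : (1 : ℝ) ≤ r := by exact_mod_cast hr
  rw [Fin.sum_univ_eq_sum_range (fun j : ℕ => max 0 (θ - (j : ℝ) / r))]
  set c := ⌊θ * r / 2⌋₊
  have hc1 : (c : ℝ) ≤ θ * r / 2 := Nat.floor_le (by positivity)
  have hc2 : θ * r / 2 < c + 1 := Nat.lt_floor_add_one _
  have hkr : (k : ℝ) ≤ r + 1 := by exact_mod_cast hk
  calc (k : ℝ) * θ ^ 2 / 8 ≤ (min k (c + 1) : ℕ) * (θ / 2) := by
        have : (k : ℝ) * θ / 4 ≤ (min k (c + 1) : ℕ) := by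
          rw [Nat.cast_min, le_min_iff]
          constructor
          · nlinarith [(Nat.cast_nonneg k : (0 : ℝ) ≤ k)]
          · push_cast; nlinarith
        nlinarith
    _ = ∑ j ∈ Finset.range (min k (c + 1)), θ / 2 := by simp
    _ ≤ ∑ j ∈ Finset.range (min k (c + 1)), max 0 (θ - (j : ℝ) / r) := by
        refine Finset.sum_le_sum fun j hj => le_max_of_le_right ?_
        have hj' : j ≤ c := by have := Finset.mem_range.1 hj; omega
        have : (j : ℝ) ≤ c := by exact_mod_cast hj'
        have : (j : ℝ) / r ≤ θ / 2 := by
          rw [div_le_iff₀ (by linarith)]; linarith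
        linarith
    _ ≤ _ := by
        refine Finset.sum_le_sum_of_subset_of_nonneg ?_ fun _ _ _ => le_max_left _ _
        intro j hj
        have := Finset.mem_range.1 hj
        exact Finset.mem_range.2 (by omega)

end RothAux

open Filter Finset MeasureTheory
set_option linter.all false
set_option linter.unusedSectionVars false
set_option linter.unusedSimpArgs false
namespace RothAux
open MvPolynomial

variable {σ : Type*} [Fintype σ] [DecidableEq σ]

lemma shift_iot (a : σ) (β : σ → ℝ) (V : Polynomial ℝ) :
    shift β (iot a V) = iot a (Polynomial.taylor (β a) V) := by
  rw [iot, ← Polynomial.aeval_algHom_apply, Polynomial.taylor_apply, Polynomial.aeval_comp]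
  congr 1
  simp [shift, algebraMap_eq]

lemma nm_slice (a : σ) (U : MvPolynomial σ ℝ) (V : Polynomial ℝ)
    (hU : SuppIn (fun J => J a = 0) U) (i : ℕ) : nm (V.coeff i • U) ≤ nm (U * iot a V) := by
  have h1 : nm (V.coeff i • U) ≤ ∑ J ∈ U.support, |coeff (J + Finsupp.single a i) (U * iot a V)| := by
    rw [nm_eq (s := U.support) (support_smul)]
    refine Finset.sum_le_sum fun J hJ => ?_
    rw [coeff_mul_iot a _ _ hU _ (hU J (by simpa using hJ)), coeff_smul, smul_eq_mul, mul_comm]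
  refine h1.trans ?_
  rw [← Finset.sum_image (s := U.support) (g := fun J => J + Finsupp.single a i) (f := fun J => |coeff J (U * iot a V)|)]
  · exact sum_le_nm _ _
  · intro x _ y _ h; simpa using h

lemma core (a : σ) (ρ : σ → ℕ) (P : MvPolynomial σ ℝ) (hP : SuppIn (degP ρ) P) (hP0 : P ≠ 0)
    (hint : IsInt P) :
    ∃ k : ℕ, 1 ≤ k ∧ k ≤ ρ a + 1 ∧ ∃ U : MvPolynomial σ ℝ, ∃ V : Polynomial ℝ,
      U ≠ 0 ∧ V ≠ 0 ∧ SuppIn (degP (fun l => k * Function.update ρ a 0 l)) U ∧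
      IsInt (U * iot a V) ∧ nm (U * iot a V) ≤ k.factorial * (2 ^ (∑ l, ρ l) * nm P) ^ k ∧
      ∀ (r : σ → ℕ) (β : σ → ℝ) (θ τ : ℝ), IndGE r β θ P →
        (∀ I : σ →₀ ℕ, I.degree < k → (∀ l, I l ≤ Function.update ρ a 0 l) → wt r I ≤ τ) →
        IndGE r β (∑ j : Fin k, max 0 (θ - τ - (j : ℕ) / r a)) (U * iot a V) := by
  obtain ⟨k, hk1, hk2, φ, ψ, hφ, hψ, hs, hsum⟩ := rank_decomp a ρ P hP hP0
  obtain ⟨I, hI, hdet⟩ := mv_rows φ hφ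
  have hdet2 := poly_rows ψ hψ
  have hIb : ∀ i l, I i l ≤ Function.update ρ a 0 l := by
    intro i
    have : ∃ s, hasse (I i) (φ s) ≠ 0 := by
      by_contra hc
      push Not at hc
      exact hdet (Matrix.det_eq_zero_of_row_eq_zero i fun s => by simpa using hc s)
    obtain ⟨s, hs0⟩ := this
    obtain ⟨K, hK⟩ := MvPolynomial.ne_zero_iff.1 hs0
    rw [coeff_hasse] at hK
    intro l
    have := hs s _ (right_ne_zero_of_mul hK) l
    simp only [Finsupp.add_apply] at this
    omega
  have hφa : ∀ s, SuppIn (fun J => J a = 0) (φ s) := fun s =>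
    (hs s).mono fun J hJ => by simpa using hJ a
  have hIa : ∀ i, I i a = 0 := fun i => by simpa using hIb i a
  set A : Matrix (Fin k) (Fin k) (MvPolynomial σ ℝ) := Matrix.of fun i s => hasse (I i) (φ s) with hA
  set B : Matrix (Fin k) (Fin k) (Polynomial ℝ) := Matrix.of fun (j : Fin k) s => Polynomial.hasseDeriv j (ψ s) with hB
  set W : Matrix (Fin k) (Fin k) (MvPolynomial σ ℝ) := Matrix.of fun i (j : Fin k) => hasse (I i + Finsupp.single a (j : ℕ)) P with hW
  have hWdet : A.det * iot a B.det = W.det := by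
    rw [AlgHom.map_det, ← Matrix.det_transpose ((iot a).mapMatrix B), ← Matrix.det_mul]
    congr 1
    ext1 i j
    rw [Matrix.mul_apply]
    simp only [hA, hB, hW, Matrix.of_apply, Matrix.transpose_apply, AlgHom.mapMatrix_apply, Matrix.map_apply]
    rw [hsum, map_sum]
    exact Finset.sum_congr rfl fun s _ => (hasse_mul_iot a _ _ (hφa s) _ (hIa i) _).symm
  refine ⟨k, hk1, hk2, A.det, B.det, hdet, hdet2, ?_, ?_, ?_, ?_⟩
  · have := SuppIn.det degP_zero degP_add (fun _ : Fin k => Function.update ρ a 0) A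
      fun i j => SuppIn.hasse (hs j) (I i)
    refine this.mono fun J hJ l => ?_
    have := hJ l
    simpa using this
  · rw [hWdet]
    exact IsInt.det _ fun i j => hint.hasse _
  · rw [hWdet]
    exact nm_det _ _ fun i j => nm_hasse hP _
  · intro r β θ τ hθ hτ
    rw [hWdet, IndGE, AlgHom.map_det]
    refine SuppIn.det (wtP_zero r) (wtP_add r) (fun j : Fin k => max 0 (θ - τ - (j : ℕ) / r a)) _ fun i j => ?_
    have h1 : IndGE r β (max 0 (θ - τ - (j : ℕ) / r a)) (W i j) := by
      rcases max_choice 0 (θ - τ - ((j : ℕ) : ℝ) / r a) with h | h <;> rw [h]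
      · exact IndGE.zero
      · refine (hθ.hasse (I i + Finsupp.single a (j : ℕ))).mono ?_
        rw [wt_add, wt_single]
        have := hτ (I i) (hI i) (hIb i)
        linarith
    exact h1

end RothAux

open Filter Finset MeasureTheory
set_option linter.all false
set_option linter.unusedSectionVars false
set_option linter.unusedSimpArgs false
namespace RothAux
open MvPolynomial

section RL
variable {σ : Type*} [Fintype σ] [LinearOrder σ]

def RL (S : Finset σ) (η δ : ℝ) : Prop := ∀ (r : σ → ℕ) (p q : σ → ℤ) (Λ : ℝ) (P : MvPolynomial σ ℝ),
  (∀ l, 1 ≤ r l) → 0 < Λ → (∀ l ∈ S, ∀ l' ∈ S, l < l' → (r l' : ℝ) ≤ δ * r l) →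
  (∀ l ∈ S, 1 ≤ q l ∧ IsCoprime (p l) (q l) ∧ (r l : ℝ) ≤ δ * Λ ∧ Λ ≤ r l * Real.log (q l)) →
  IsInt P → P ≠ 0 → SuppIn (degP fun l => if l ∈ S then r l else 0) P →
  Real.log (nm P) ≤ δ * Λ →
  ∃ J, wt r J ≤ η ∧ coeff J (shift (fun l => (p l : ℝ) / q l) P) ≠ 0

lemma nm_pos {P : MvPolynomial σ ℝ} (h : P ≠ 0) : 0 < nm P := by
  obtain ⟨J, hJ⟩ := MvPolynomial.ne_zero_iff.1 h
  exact lt_of_lt_of_le (abs_pos.2 hJ) (coeff_le_nm P J)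

lemma log_fact (k : ℕ) (hk : 1 ≤ k) : Real.log k.factorial ≤ k * (k - 1) := by
  have hk0 : (0:ℝ) < k := by exact_mod_cast hk
  have h1 : ((k.factorial : ℕ) : ℝ) ≤ (k : ℝ) ^ k := by exact_mod_cast Nat.factorial_le_pow k
  calc Real.log k.factorial ≤ Real.log ((k : ℝ) ^ k) :=
        Real.log_le_log (by exact_mod_cast Nat.factorial_pos k) h1
    _ = k * Real.log k := Real.log_pow _ _
    _ ≤ _ := mul_le_mul_of_nonneg_left (Real.log_le_sub_one_of_pos hk0) hk0.le

set_option maxHeartbeats 1000000 in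
lemma RL_step (S : Finset σ) (a : σ) (haS : ∀ x ∈ S, x < a) (η : ℝ) (hη0 : 0 < η) (hη1 : η ≤ 1)
    (δ' : ℝ) (hδ' : 0 < δ') (ih : RL S (η ^ 2 / 100) δ') :
    ∃ δ, 0 < δ ∧ RL (insert a S) η δ := by
  have hanS : a ∉ S := fun h => lt_irrefl a (haS a h)
  set M : ℝ := (Fintype.card σ : ℝ) with hM
  have hM0 : 0 ≤ M := by positivity
  set η' := η ^ 2 / 100 with hη'
  have hη'0 : 0 < η' := by positivity
  set δ := min (min (δ' / (M + 3)) (η' / (M + 3))) (min (η / 2) δ') with hδ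
  have hδ0 : 0 < δ := by
    rw [hδ]; refine lt_min (lt_min ?_ ?_) (lt_min ?_ ?_) <;> positivity
  have d1 : (M + 3) * δ ≤ δ' := by
    have : δ ≤ δ' / (M + 3) := (min_le_left _ _).trans (min_le_left _ _)
    rw [le_div_iff₀ (by positivity)] at this; linarith
  have d2 : (M + 3) * δ ≤ η' := by
    have : δ ≤ η' / (M + 3) := (min_le_left _ _).trans (min_le_right _ _)
    rw [le_div_iff₀ (by positivity)] at this; linarith
  have d3 : δ ≤ η / 2 := (min_le_right _ _).trans (min_le_left _ _)
  have d4 : δ ≤ δ' := (min_le_right _ _).trans (min_le_right _ _)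
  clear_value δ
  refine ⟨δ, hδ0, ?_⟩
  intro r p q Λ P hr hΛ hrr hpq hint hP0 hsupp hnm
  by_contra hcon
  push Not at hcon
  set β : σ → ℝ := fun l => (p l : ℝ) / q l with hβ
  have hind : IndGE r β η P := by
    intro J hJ
    by_contra hc
    exact hJ (hcon J (le_of_lt (not_le.1 hc)))
  set ρ : σ → ℕ := fun l => if l ∈ insert a S then r l else 0 with hρ
  have hρa : ρ a = r a := by simp [hρ]
  have hupd : ∀ l, Function.update ρ a 0 l = if l ∈ S then r l else 0 := by
    intro l
    by_cases h : l = a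
    · subst h; simp [hanS]
    · rw [Function.update_of_ne h]; simp [hρ, h]
  have hrpos : ∀ l, (0:ℝ) < r l := fun l => by exact_mod_cast hr l
  obtain ⟨k, hk1, hk2, U, V, hU0, hV0, hUs, hWint, hWnm, hWind⟩ := core a ρ P hsupp hP0 hint
  rw [hρa] at hk2
  have hk0 : (0:ℝ) < k := by exact_mod_cast hk1
  have hkr : (k:ℝ) ≤ r a + 1 := by exact_mod_cast hk2
  have hraΛ : (r a : ℝ) ≤ δ * Λ := (hpq a (by simp)).2.2.1
  -- index lower bound
  have hτ : ∀ I : σ →₀ ℕ, I.degree < k → (∀ l, I l ≤ Function.update ρ a 0 l) → wt r I ≤ δ := by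
    intro I hI hIl
    have h1 : ∀ l, (I l : ℝ) / r l ≤ I l * (δ / r a) := by
      intro l
      have hl := hIl l
      rw [hupd] at hl
      by_cases h : l ∈ S
      · have h2 := hrr l (by simp [h]) a (by simp) (haS l h)
        rw [div_eq_mul_inv]
        refine mul_le_mul_of_nonneg_left ?_ (Nat.cast_nonneg _)
        rw [inv_le_comm₀ (hrpos l) (div_pos hδ0 (hrpos a)), inv_div, div_le_iff₀ hδ0]
        linarith
      · simp [h] at hl; simp [hl]
    have h2 : wt r I ≤ (I.degree : ℝ) * (δ / r a) := by
      rw [Finsupp.degree_eq_sum]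
      push_cast
      rw [Finset.sum_mul]
      exact Finset.sum_le_sum fun l _ => h1 l
    have h3 : (I.degree : ℝ) ≤ r a := by
      have : I.degree ≤ r a := by omega
      exact_mod_cast this
    calc wt r I ≤ _ := h2
      _ ≤ r a * (δ / r a) := mul_le_mul_of_nonneg_right h3 (div_pos hδ0 (hrpos a)).le
      _ = δ := by field_simp [(hrpos a).ne']
  have hWi := hWind r β η δ hind hτ
  set W := U * iot a V with hW
  have hθ := sum_bound (η - δ) (by linarith) (by linarith) (r a) k (hr a) hk2
  have hlow : IndGE r β (k * (η - δ) ^ 2 / 8) W := hWi.mono hθ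
  -- U has no a-variable
  have hUa : SuppIn (fun J => J a = 0) U := hUs.mono fun J hJ => by simpa using hJ a
  obtain ⟨J0, hJ0⟩ := MvPolynomial.ne_zero_iff.1 hU0
  have hJ0a : J0 a = 0 := hUa _ hJ0
  have hlc : V.coeff V.natDegree ≠ 0 := by simpa using hV0
  have hcW : ∀ J : σ →₀ ℕ, J a = 0 → ∀ i, coeff (J + Finsupp.single a i) W = coeff J U * V.coeff i :=
    fun J hJ i => coeff_mul_iot a U V hUa J hJ i
  have hW0 : W ≠ 0 := by
    intro h
    have := hcW J0 hJ0a V.natDegree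
    rw [h, coeff_zero] at this
    exact mul_ne_zero hJ0 hlc this.symm
  -- norm bound
  have hlogW : Real.log (nm W) ≤ k * ((M + 3) * δ) * Λ := by
    have hPpos := nm_pos hP0
    have hs : ((∑ l, ρ l : ℕ) : ℝ) ≤ M * (δ * Λ) := by
      push_cast
      calc ∑ l, (ρ l : ℝ) ≤ ∑ l : σ, δ * Λ := by
            refine Finset.sum_le_sum fun l _ => ?_
            by_cases h : l ∈ insert a S
            · simp only [hρ, if_pos h]; exact (hpq l h).2.2.1
            · simp only [hρ, if_neg h]; simp; positivity
        _ = _ := by simp [hM]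
    have hlog2 : Real.log 2 ≤ 1 := by have := Real.log_two_lt_d9; linarith
    have hf : (0:ℝ) < k.factorial := by exact_mod_cast Nat.factorial_pos k
    have h1 : Real.log (nm W) ≤ Real.log k.factorial + k * ((∑ l, ρ l : ℕ) * Real.log 2 + Real.log (nm P)) := by
      refine (Real.log_le_log (nm_pos hW0) hWnm).trans (le_of_eq ?_)
      rw [Real.log_mul hf.ne' (by positivity), Real.log_pow, Real.log_mul (by positivity) hPpos.ne', Real.log_pow]
    have h2 := log_fact k hk1
    have h3 : ((∑ l, ρ l : ℕ) : ℝ) * Real.log 2 ≤ M * (δ * Λ) := by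
      have := Real.log_pos (by norm_num : (1:ℝ) < 2)
      have h0 : (0:ℝ) ≤ ((∑ l, ρ l : ℕ) : ℝ) := Nat.cast_nonneg _
      nlinarith
    have h4 : (k:ℝ) * (k - 1) ≤ k * (δ * Λ) := mul_le_mul_of_nonneg_left (by linarith) hk0.le
    have h5 : (k:ℝ) * ((∑ l, ρ l : ℕ) * Real.log 2 + Real.log (nm P)) ≤ k * (M * (δ * Λ) + δ * Λ) :=
      mul_le_mul_of_nonneg_left (by linarith) hk0.le
    have h6 : 0 ≤ (k:ℝ) * (δ * Λ) := by positivity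
    nlinarith
  -- apply IH
  have hU' : ∃ J, wt (fun l => k * r l) J ≤ η' ∧ coeff J (shift β (V.coeff V.natDegree • U)) ≠ 0 := by
    refine ih (fun l => k * r l) p q (k * Λ) _ (fun l => Nat.one_le_iff_ne_zero.2 (mul_ne_zero (by omega) (by have := hr l; omega))) (by positivity) ?_ ?_ ?_ ?_ ?_ ?_
    · intro l hl l' hl' hll
      have := hrr l (by simp [hl]) l' (by simp [hl']) hll
      push_cast
      have h2 : (r l' : ℝ) ≤ δ' * r l := this.trans (mul_le_mul_of_nonneg_right d4 (hrpos l).le)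
      nlinarith
    · intro l hl
      obtain ⟨h1, h2, h3, h4⟩ := hpq l (by simp [hl])
      refine ⟨h1, h2, ?_, ?_⟩
      · push_cast
        have : (r l : ℝ) ≤ δ' * Λ := h3.trans (mul_le_mul_of_nonneg_right d4 hΛ.le)
        nlinarith
      · push_cast; nlinarith
    · intro J
      by_cases h : J a = 0
      · obtain ⟨z, hz⟩ := hWint (J + Finsupp.single a V.natDegree)
        refine ⟨z, ?_⟩
        rw [← hz, hcW J h, coeff_smul, smul_eq_mul, mul_comm]
      · refine ⟨0, ?_⟩
        have : coeff J U = 0 := by by_contra hc; exact h (hUa J hc)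
        simp [this]
    · exact smul_ne_zero hlc hU0
    · refine SuppIn.smul _ (hUs.mono fun J hJ l => ?_)
      have := hJ l
      simp only [hupd] at this
      by_cases h : l ∈ S <;> simp only [h, if_true, if_false] at this ⊢ <;> simpa using this
    · have h1 : Real.log (nm (V.coeff V.natDegree • U)) ≤ Real.log (nm W) :=
        Real.log_le_log (nm_pos (smul_ne_zero hlc hU0)) (nm_slice a U V hUa _)
      have : k * ((M + 3) * δ) * Λ ≤ k * δ' * Λ := by gcongr
      linarith
  obtain ⟨J1, hJ1w, hJ1⟩ := hU'
  have hJ1' : coeff J1 (shift β U) ≠ 0 := by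
    rw [map_smul, coeff_smul, smul_eq_mul] at hJ1
    exact right_ne_zero_of_mul hJ1
  have hUsa : SuppIn (fun J => J a = 0) (shift β U) :=
    (SuppIn.shift hUs β).mono fun J hJ => by simpa using hJ a
  have hJ1a := hUsa _ hJ1'
  have hw1 : wt r J1 ≤ k * η' := by
    have : wt (fun l => k * r l) J1 = wt r J1 / k := by
      unfold wt
      rw [Finset.sum_div]
      refine Finset.sum_congr rfl fun l _ => ?_
      push_cast
      rw [div_div, mul_comm]
    rw [this, div_le_iff₀ hk0] at hJ1w
    linarith
  -- univariate
  obtain ⟨hqa1, hqa2, -, hqa4⟩ := hpq a (by simp)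
  obtain ⟨j, hj, hjq⟩ := uni (p a) (q a) hqa1 hqa2 (coeff J0 U • V) (smul_ne_zero hJ0 hV0) (by
    intro i
    obtain ⟨z, hz⟩ := hWint (J0 + Finsupp.single a i)
    exact ⟨z, by rw [← hz, hcW J0 hJ0a, Polynomial.coeff_smul, smul_eq_mul]⟩)
  have hj' : (Polynomial.taylor (β a) V).coeff j ≠ 0 := by
    rw [map_smul, Polynomial.coeff_smul, smul_eq_mul] at hj
    exact right_ne_zero_of_mul hj
  have hjb : (j : ℝ) / r a ≤ k * η' := by
    have hlogpos : 0 < Real.log (q a) := by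
      by_contra hc
      have := mul_nonpos_of_nonneg_of_nonpos (hrpos a).le (not_lt.1 hc)
      linarith
    have h1 : |(coeff J0 U • V).leadingCoeff| ≤ nm W := by
      have := coeff_le_nm W (J0 + Finsupp.single a V.natDegree)
      rw [hcW J0 hJ0a] at this
      rw [Polynomial.leadingCoeff, Polynomial.coeff_smul, smul_eq_mul, Polynomial.natDegree_smul _ hJ0]
      exact this
    have hqpos : (0:ℝ) < q a := by exact_mod_cast hqa1
    have h2 : j * Real.log (q a) ≤ Real.log (nm W) := by
      rw [← Real.log_pow]
      exact Real.log_le_log (by positivity) (hjq.trans h1)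
    have h3 : k * ((M + 3) * δ) * Λ ≤ k * η' * Λ := by gcongr
    have h4 : k * η' * Λ ≤ k * η' * (r a * Real.log (q a)) := by gcongr
    have h5 : j * Real.log (q a) ≤ (k * η' * r a) * Real.log (q a) := by linarith
    rw [div_le_iff₀ (hrpos a)]
    exact le_of_mul_le_mul_right h5 hlogpos
  have hfin : coeff (J1 + Finsupp.single a j) (shift β W) ≠ 0 := by
    rw [hW, map_mul, shift_iot, coeff_mul_iot a _ _ hUsa _ hJ1a]
    exact mul_ne_zero hJ1' hj'
  have h1 := hlow _ hfin
  unfold wtP at h1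
  rw [wt_add, wt_single] at h1
  have h2 : (η / 2) ^ 2 ≤ (η - δ) ^ 2 := by
    apply pow_le_pow_left₀ <;> linarith
  have h3 : k * (η - δ) ^ 2 / 8 ≤ 2 * (k * η') := by linarith
  have h4 : k * (η / 2) ^ 2 ≤ k * (η - δ) ^ 2 := by gcongr
  have h5 : 0 < k * η ^ 2 := by positivity
  rw [hη'] at h3
  nlinarith

lemma roth_lemma (S : Finset σ) : ∀ η : ℝ, 0 < η → η ≤ 1 → ∃ δ, 0 < δ ∧ RL S η δ := by
  induction S using Finset.induction_on_max with
  | empty =>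
    intro η h0 h1
    refine ⟨1, one_pos, ?_⟩
    intro r p q Λ P hr hΛ _ _ hint hP0 hs _
    refine ⟨0, by simp [wt]; exact h0.le, ?_⟩
    have hP : P = C (coeff 0 P) := by
      ext J
      rw [coeff_C]
      split_ifs with h
      · rw [h]
      · by_contra hc
        apply h
        have := hs J hc
        ext l
        have := this l
        simp at this
        simp [this]
    rw [hP, shift, aeval_C, algebraMap_eq, coeff_C]
    simp
    intro h
    rw [h] at hP
    exact hP0 (by rw [hP]; simp)
  | insert a S ha ih =>
    intro η h0 h1
    obtain ⟨δ', hδ', h⟩ := ih (η ^ 2 / 100) (by positivity) (by nlinarith)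
    exact RL_step S a ha η h0 h1 δ' hδ' h

end RL
end RothAux

open Filter Finset MeasureTheory
set_option linter.all false
set_option linter.unusedSectionVars false
set_option linter.unusedSimpArgs false
namespace RothAux
open MvPolynomial

lemma powred_aux (α : ℝ) (d : ℕ) (g : ℕ → ℤ) (hg : α ^ (d + 1) = ∑ b ∈ Finset.range (d + 1), (g b : ℝ) * α ^ b)
    (C : ℝ) (hC : ∀ b ∈ Finset.range (d + 1), 1 + |(g b : ℝ)| ≤ C) (e : ℕ) :
    ∃ c : ℕ → ℤ, α ^ e = ∑ b ∈ Finset.range (d + 1), (c b : ℝ) * α ^ b ∧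
      ∀ b ∈ Finset.range (d + 1), |(c b : ℝ)| ≤ C ^ e := by
  induction e with
  | zero =>
    refine ⟨fun b => if b = 0 then 1 else 0, ?_, ?_⟩
    · simp
    · intro b hb; by_cases h : b = 0 <;> simp [h]
  | succ e ih =>
    obtain ⟨c, hc, hcb⟩ := ih
    have hC0 : 0 ≤ C := by
      have := hC 0 (by simp); have := abs_nonneg (g 0 : ℝ); linarith
    refine ⟨fun b => (if b = 0 then 0 else c (b - 1)) + c d * g b, ?_, ?_⟩
    · push_cast
      simp only [add_mul, Finset.sum_add_distrib, mul_assoc]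
      rw [← Finset.mul_sum, ← hg, Finset.sum_range_succ', pow_succ, hc, Finset.sum_mul, Finset.sum_range_succ]
      simp
      congr 1
      · exact Finset.sum_congr rfl fun x _ => by ring
      · ring
    · intro b hb
      have h1 := hC b hb
      have h2 : |(c d : ℝ)| ≤ C ^ e := hcb d (by simp)
      have h3 : |((if b = 0 then 0 else c (b - 1) : ℤ) : ℝ)| ≤ C ^ e := by
        split_ifs with h
        · simp; positivity
        · exact hcb _ (by simp at hb ⊢; omega)
      have h4 := abs_nonneg (g b : ℝ)
      push_cast at h3 ⊢
      calc _ ≤ _ := abs_add_le _ _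
        _ ≤ C ^ e + C ^ e * |(g b : ℝ)| := by
            rw [abs_mul]; gcongr
        _ = C ^ e * (1 + |(g b : ℝ)|) := by ring
        _ ≤ C ^ e * C := by gcongr
        _ = _ := by ring

lemma powred (α : ℝ) (h : IsIntegral ℤ α) : ∃ d : ℕ, ∃ C : ℝ, 1 ≤ C ∧ ∃ c : ℕ → ℕ → ℤ,
    ∀ e, α ^ e = ∑ b ∈ Finset.range (d + 1), (c e b : ℝ) * α ^ b ∧
      ∀ b ∈ Finset.range (d + 1), |(c e b : ℝ)| ≤ C ^ e := by
  obtain ⟨f, hf, hfα⟩ := h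
  have hd : f.natDegree ≠ 0 := by
    intro h0
    rw [hf.natDegree_eq_zero.1 h0] at hfα
    simp at hfα
  obtain ⟨d, hd'⟩ := Nat.exists_eq_succ_of_ne_zero hd
  have hg : α ^ (d + 1) = ∑ b ∈ Finset.range (d + 1), ((-f.coeff b : ℤ) : ℝ) * α ^ b := by
    rw [Polynomial.eval₂_eq_sum_range, hd', Finset.sum_range_succ] at hfα
    have : f.coeff (d.succ) = 1 := by rw [← hd']; exact hf
    rw [this] at hfα
    simp at hfα
    push_cast
    simp only [neg_mul, Finset.sum_neg_distrib]
    try simp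
    linarith
  set C : ℝ := 1 + ∑ b ∈ Finset.range (d + 1), |((-f.coeff b : ℤ) : ℝ)| with hC
  have h1 : ∀ b ∈ Finset.range (d + 1), 1 + |((-f.coeff b : ℤ) : ℝ)| ≤ C := by
    intro b hb
    have := Finset.single_le_sum (f := fun b => |((-f.coeff b : ℤ) : ℝ)|) (fun _ _ => abs_nonneg _) hb
    simp only [hC]; linarith
  choose c hc using powred_aux α d (fun b => -f.coeff b) hg C h1
  refine ⟨d, C, ?_, c, hc⟩
  have : 0 ≤ ∑ b ∈ Finset.range (d + 1), |((-f.coeff b : ℤ) : ℝ)| := by positivity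
  linarith

lemma sum_exp (r : ℕ) (hr : 1 ≤ r) (c : ℝ) (hc : 0 ≤ c) :
    ∑ i : Fin (r + 1), Real.exp (-(c * ((i : ℕ) / r : ℝ))) ≤ (r + 1) * Real.exp (-(c / 2) + c ^ 2 / 8) := by
  have hr0 : (0:ℝ) < r := by exact_mod_cast hr
  have h1 : ∀ i : Fin (r + 1), Real.exp (-(c * ((i : ℕ) / r : ℝ))) = Real.exp (-(c / 2)) * Real.exp (c * (1 / 2 - (i : ℕ) / r)) := by
    intro i; rw [← Real.exp_add]; congr 1; ring
  have h2 : ∑ i : Fin (r + 1), Real.exp (c * (1 / 2 - ((i : ℕ) : ℝ) / r)) = ∑ i : Fin (r + 1), Real.exp (-(c * (1 / 2 - ((i : ℕ) : ℝ) / r))) := by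
    rw [← Equiv.sum_comp Fin.revPerm]
    refine Finset.sum_congr rfl fun i _ => ?_
    have : i.1 ≤ r := by omega
    simp only [Fin.revPerm_apply, Fin.val_rev]
    congr 1
    rw [Nat.cast_sub (by omega)]
    push_cast
    field_simp
    ring
  have h3 : ∑ i : Fin (r + 1), Real.exp (c * (1 / 2 - ((i : ℕ) : ℝ) / r)) ≤ (r + 1) * Real.exp (c ^ 2 / 8) := by
    have : ∑ i : Fin (r + 1), Real.exp (c * (1 / 2 - ((i : ℕ) : ℝ) / r)) = ∑ i : Fin (r + 1), Real.cosh (c * (1 / 2 - ((i : ℕ) : ℝ) / r)) := by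
      simp only [Real.cosh_eq]
      rw [← Finset.sum_div, Finset.sum_add_distrib, ← h2]
      ring
    rw [this]
    calc _ ≤ ∑ i : Fin (r + 1), Real.exp (c ^ 2 / 8) := by
          refine Finset.sum_le_sum fun i _ => ?_
          refine (Real.cosh_le_exp_half_sq _).trans (Real.exp_le_exp.2 ?_)
          have hi : ((i : ℕ) : ℝ) / r ≤ 1 := by
            rw [div_le_one hr0]; exact_mod_cast (by omega : i.1 ≤ r)
          have hi0 : 0 ≤ ((i : ℕ) : ℝ) / r := by positivity
          have : (1 / 2 - ((i : ℕ) : ℝ) / r) ^ 2 ≤ 1 / 4 := by nlinarith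
          rw [mul_pow]
          nlinarith [sq_nonneg c]
      _ = _ := by simp
  simp only [h1]
  rw [← Finset.mul_sum, Real.exp_add]
  have := Real.exp_pos (-(c / 2))
  nlinarith

lemma count {σ : Type*} [Fintype σ] [DecidableEq σ] (r : σ → ℕ) (hr : ∀ l, 1 ≤ r l) :
    ((Finset.univ.filter fun I : (∀ l, Fin (r l + 1)) => ∑ l, ((I l : ℕ) : ℝ) / r l < 2 / 5 * Fintype.card σ).card : ℝ)
      ≤ (∏ l, ((r l : ℝ) + 1)) * Real.exp (-(1 / 50) * Fintype.card σ) := by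
  set m : ℝ := (Fintype.card σ : ℝ) with hm
  calc ((Finset.univ.filter fun I : (∀ l, Fin (r l + 1)) => ∑ l, ((I l : ℕ) : ℝ) / r l < 2 / 5 * m).card : ℝ)
      = ∑ I : (∀ l, Fin (r l + 1)), if ∑ l, ((I l : ℕ) : ℝ) / r l < 2 / 5 * m then 1 else 0 := by
        simp
    _ ≤ ∑ I : (∀ l, Fin (r l + 1)), Real.exp (2 / 5 * (2 / 5 * m)) * ∏ l, Real.exp (-(2 / 5 * (((I l : ℕ) : ℝ) / r l))) := by
        refine Finset.sum_le_sum fun I _ => ?_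
        rw [← Real.exp_sum, ← Real.exp_add, Finset.sum_neg_distrib, ← Finset.mul_sum]
        split_ifs with h
        · rw [Real.one_le_exp_iff]; linarith
        · positivity
    _ = Real.exp (2 / 5 * (2 / 5 * m)) * ∏ l, ∑ i : Fin (r l + 1), Real.exp (-(2 / 5 * (((i : ℕ) : ℝ) / r l))) := by
        rw [← Finset.mul_sum, Finset.prod_univ_sum, Fintype.piFinset_univ]
    _ ≤ Real.exp (2 / 5 * (2 / 5 * m)) * ∏ l, (((r l : ℝ) + 1) * Real.exp (-((2 / 5) / 2) + (2 / 5) ^ 2 / 8)) := by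
        refine mul_le_mul_of_nonneg_left ?_ (Real.exp_pos _).le
        refine Finset.prod_le_prod (fun l _ => by positivity) fun l _ => ?_
        exact sum_exp (r l) (hr l) (2 / 5) (by norm_num)
    _ = _ := by
        rw [Finset.prod_mul_distrib, Finset.prod_const, ← Real.exp_nat_mul, Finset.card_univ, mul_left_comm, ← Real.exp_add]
        congr 2
        rw [← hm]; ring

end RothAux

open Filter Finset MeasureTheory
set_option linter.all false
set_option linter.unusedSectionVars false
set_option linter.unusedSimpArgs false
namespace RothAux
open MvPolynomial

lemma siegel {a b : Type} [Fintype a] [Fintype b] (A : Matrix a b ℤ) (B : ℝ) (hB : 1 ≤ B)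
    (hA : ∀ i j, |(A i j : ℝ)| ≤ B) (h0 : 0 < Fintype.card a) (h2 : 2 * Fintype.card a ≤ Fintype.card b) :
    ∃ t : b → ℤ, t ≠ 0 ∧ A.mulVec t = 0 ∧ ∀ j, |(t j : ℝ)| ≤ Fintype.card b * B := by
  classical
  obtain ⟨t, ht0, htA, htn⟩ := Int.Matrix.exists_ne_zero_int_vec_norm_le A (by omega) h0
  refine ⟨t, ht0, htA, fun j => ?_⟩
  have hn : (1:ℝ) ≤ Fintype.card b := by exact_mod_cast (by omega : 1 ≤ Fintype.card b)
  have hmn : (2:ℝ) * Fintype.card a ≤ Fintype.card b := by exact_mod_cast h2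
  have hm : (0:ℝ) < Fintype.card a := by exact_mod_cast h0
  letI := Matrix.seminormedAddCommGroup (m := a) (n := b) (α := ℤ)
  have hAn : ‖A‖ ≤ B := by
    rw [Matrix.norm_le_iff (by linarith)]
    intro i j; rw [Int.norm_eq_abs]; exact hA i j
  have h1 : ‖t j‖ ≤ ‖t‖ := norm_le_pi_norm t j
  rw [Int.norm_eq_abs] at h1
  have hbase : (Fintype.card b : ℝ) * max 1 ‖A‖ ≤ Fintype.card b * B := by
    gcongr; exact max_le hB hAn
  have hbase1 : 1 ≤ (Fintype.card b : ℝ) * max 1 ‖A‖ := by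
    have := le_max_left 1 ‖A‖; nlinarith
  calc _ ≤ _ := h1
    _ ≤ _ := htn
    _ ≤ ((Fintype.card b : ℝ) * max 1 ‖A‖) ^ (1:ℝ) := by
        refine Real.rpow_le_rpow_of_exponent_le hbase1 ?_
        rw [div_le_one (by linarith)]; linarith
    _ = _ := Real.rpow_one _
    _ ≤ _ := hbase

section
variable {σ : Type*} [Fintype σ] [DecidableEq σ]

lemma coeff_zero_shift (β : σ → ℝ) (P : MvPolynomial σ ℝ) : coeff 0 (shift β P) = eval β P := by
  rw [← constantCoeff_eq, shift, aeval_def, algebraMap_eq]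
  have : (constantCoeff (σ := σ) (R := ℝ)).comp (eval₂Hom C (fun l => X l + C (β l))) = eval β := by
    apply MvPolynomial.ringHom_ext <;> simp
  exact congrArg (fun f => f P) this

lemma coeff_shift_eq (β : σ → ℝ) (P : MvPolynomial σ ℝ) (I : σ →₀ ℕ) :
    coeff I (shift β P) = eval β (hasse I P) := by
  rw [← coeff_zero_shift, shift_hasse, coeff_hasse]
  simp

end

lemma aux_poly {m : ℕ} (hm : 1 ≤ m) (α : ℝ) (d : ℕ) (C₀ : ℝ) (hC : 1 ≤ C₀) (c : ℕ → ℕ → ℤ)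
    (hc : ∀ e, α ^ e = ∑ b ∈ Finset.range (d + 1), (c e b : ℝ) * α ^ b ∧
      ∀ b ∈ Finset.range (d + 1), |(c e b : ℝ)| ≤ C₀ ^ e)
    (hmd : 2 * ((d : ℝ) + 1) * Real.exp (-(1 / 50) * m) ≤ 1)
    (r : Fin m → ℕ) (hr : ∀ l, 1 ≤ r l) :
    ∃ P : MvPolynomial (Fin m) ℝ, IsInt P ∧ P ≠ 0 ∧ SuppIn (degP r) P ∧
      IndGE r (fun _ => α) (2 / 5 * m) P ∧ nm P ≤ (8 * C₀) ^ (∑ l, r l) := by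
  classical
  let β : Type := ∀ l, Fin (r l + 1)
  let toF : β → (Fin m →₀ ℕ) := fun f => Finsupp.equivFunOnFinite.symm fun l => (f l : ℕ)
  have htoF : ∀ f l, toF f l = (f l : ℕ) := fun f l => rfl
  have hinj : Function.Injective toF := by
    intro f g h
    funext l
    have := DFunLike.congr_fun h l
    rw [htoF, htoF] at this
    exact Fin.ext this
  let bad : Type := {I : β // ∑ l, ((I l : ℕ) : ℝ) / r l < 2 / 5 * Fintype.card (Fin m)}
  let A : Matrix (bad × Fin (d + 1)) β ℤ := fun Ib f =>
    (∏ l, ((f l : ℕ).choose (Ib.1.1 l : ℕ) : ℤ)) * c (∑ l, ((f l : ℕ) - (Ib.1.1 l : ℕ))) Ib.2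
  have hN : (Fintype.card β : ℝ) = ∏ l, ((r l : ℝ) + 1) := by
    simp [β, Fintype.card_pi]
  have hN2 : (Fintype.card β : ℝ) ≤ 2 ^ (∑ l, r l) := by
    rw [hN, ← Finset.prod_pow_eq_pow_sum]
    refine Finset.prod_le_prod (fun _ _ => by positivity) fun l _ => ?_
    have : r l + 1 ≤ 2 ^ (r l) := Nat.lt_two_pow_self
    exact_mod_cast this
  have hcard : 2 * Fintype.card (bad × Fin (d + 1)) ≤ Fintype.card β := by
    have h1 := count r hr
    rw [← Fintype.card_subtype, ← hN] at h1
    have h1' : (Fintype.card bad : ℝ) ≤ Fintype.card β * Real.exp (-(1 / 50) * m) := by simpa [bad] using h1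
    have : (2:ℝ) * (Fintype.card bad * (d + 1)) ≤ Fintype.card β := by
      have hb : (0:ℝ) ≤ Fintype.card β := Nat.cast_nonneg _
      calc (2:ℝ) * (Fintype.card bad * (d + 1)) ≤ 2 * ((Fintype.card β * Real.exp (-(1 / 50) * m)) * (d + 1)) := by gcongr
        _ = Fintype.card β * (2 * ((d : ℝ) + 1) * Real.exp (-(1 / 50) * m)) := by ring
        _ ≤ Fintype.card β * 1 := by gcongr
        _ = _ := mul_one _
    have e : Fintype.card (bad × Fin (d + 1)) = Fintype.card bad * (d + 1) := by
      rw [Fintype.card_prod]; congr 1; exact Fintype.card_fin _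
    rw [e]
    exact_mod_cast this
  have hpos : 0 < Fintype.card (bad × Fin (d + 1)) := by
    refine Fintype.card_pos_iff.2 ⟨⟨⟨fun l => 0, ?_⟩, 0⟩⟩
    simp; omega
  have hAb : ∀ i j, |(A i j : ℝ)| ≤ (2 * C₀) ^ (∑ l, r l) := by
    intro i j
    simp only [A]
    push_cast
    rw [abs_mul, mul_pow]
    have hs : (∑ l, ((j l : ℕ) - (i.1.1 l : ℕ))) ≤ ∑ l, r l := Finset.sum_le_sum fun l _ => by omega
    refine mul_le_mul ?_ ?_ (abs_nonneg _) (by positivity)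
    · rw [abs_of_nonneg (by positivity), ← Finset.prod_pow_eq_pow_sum]
      refine Finset.prod_le_prod (fun _ _ => by positivity) fun l _ => ?_
      have h1 : (j l : ℕ).choose (i.1.1 l : ℕ) ≤ 2 ^ (j l : ℕ) := Nat.choose_le_two_pow _ _
      have h2 : 2 ^ (j l : ℕ) ≤ 2 ^ (r l) := Nat.pow_le_pow_right (by norm_num) (by omega)
      exact_mod_cast h1.trans h2
    · exact ((hc _).2 _ (Finset.mem_range.2 i.2.2)).trans (pow_le_pow_right₀ hC hs)
  obtain ⟨t, ht0, htA, htb⟩ := siegel A ((2 * C₀) ^ (∑ l, r l)) (one_le_pow₀ (by linarith)) hAb hpos hcard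
  let P : MvPolynomial (Fin m) ℝ := ∑ f : β, monomial (toF f) (t f : ℝ)
  have hcP : ∀ f : β, coeff (toF f) P = t f := by
    intro f
    simp only [P, coeff_sum, coeff_monomial]
    rw [Finset.sum_eq_single f]
    · simp
    · intro g _ hg; rw [if_neg]; intro h; exact hg (hinj h)
    · simp
  have hdeg : SuppIn (degP r) P := by
    refine SuppIn.sum _ fun f _ => ?_
    intro J hJ l
    rw [coeff_monomial] at hJ
    have hJK : toF f = J := by by_contra hc; simp [hc] at hJ
    rw [← hJK, htoF]; omega
  refine ⟨P, ?_, ?_, hdeg, ?_, ?_⟩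
  · intro J
    simp only [P, coeff_sum, coeff_monomial]
    exact ⟨∑ f : β, if toF f = J then t f else 0, by push_cast; rfl⟩
  · intro h
    apply ht0
    funext f
    have := hcP f
    rw [h, coeff_zero] at this
    exact_mod_cast this.symm
  · intro J hJ
    by_contra hcon
    have hcon' : wt r J < 2 / 5 * m := not_le.1 hcon
    have hJr := (SuppIn.shift hdeg _) J hJ
    let I : β := fun l => ⟨J l, by have := hJr l; omega⟩
    have hIJ : toF I = J := by ext l; rfl
    have hI : ∑ l, ((I l : ℕ) : ℝ) / r l < 2 / 5 * Fintype.card (Fin m) := by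
      rw [Fintype.card_fin]; exact hcon'
    apply hJ
    rw [coeff_shift_eq]
    simp only [P, map_sum, hasse_monomial, eval_monomial]
    have h1 : ∀ f : β, (t f : ℝ) * (∏ l, ((toF f l).choose (J l) : ℝ)) * ((toF f - J).prod fun l e => α ^ e)
        = ∑ b : Fin (d + 1), ((A (⟨I, hI⟩, b) f * t f : ℤ) : ℝ) * α ^ (b : ℕ) := by
      intro f
      have h2 : ((toF f - J).prod fun l e => α ^ e) = α ^ (∑ l, ((f l : ℕ) - J l)) := by
        rw [Finsupp.prod_fintype _ _ (by simp), ← Finset.prod_pow_eq_pow_sum]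
        rfl
      rw [h2, (hc _).1, Finset.mul_sum, Finset.sum_range]
      refine Finset.sum_congr rfl fun b _ => ?_
      simp only [A, I]
      push_cast
      simp only [htoF]
      ring
    rw [Finset.sum_congr rfl fun f _ => h1 f, Finset.sum_comm]
    refine Finset.sum_eq_zero fun b _ => ?_
    rw [← Finset.sum_mul, ← Int.cast_sum]
    have := congrFun htA (⟨I, hI⟩, b)
    simp only [Matrix.mulVec, dotProduct, Pi.zero_apply] at this
    rw [this]; simp
  · calc nm P ≤ ∑ f : β, nm (monomial (toF f) (t f : ℝ)) := nm_sum _ _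
      _ ≤ ∑ f : β, (Fintype.card β * (2 * C₀) ^ (∑ l, r l)) := by
          refine Finset.sum_le_sum fun f _ => ?_
          rw [nm_monomial]; exact htb f
      _ = Fintype.card β * (Fintype.card β * (2 * C₀) ^ (∑ l, r l)) := by
          simp
      _ ≤ 2 ^ (∑ l, r l) * (2 ^ (∑ l, r l) * (2 * C₀) ^ (∑ l, r l)) := by gcongr
      _ = _ := by rw [← mul_pow, ← mul_pow]; congr 1; ring

end RothAux

open Filter Finset MeasureTheory
set_option linter.all false
set_option linter.unusedSectionVars false
set_option linter.unusedSimpArgs false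
namespace RothAux
open MvPolynomial

section
variable {σ : Type*} [Fintype σ] [DecidableEq σ]

lemma eval_shift (a γ : σ → ℝ) (P : MvPolynomial σ ℝ) : eval γ (shift a P) = eval (fun l => γ l + a l) P := by
  rw [shift, aeval_def, algebraMap_eq]
  have : (eval γ).comp (eval₂Hom C (fun l => X l + C (a l))) = eval (fun l => γ l + a l) := by
    apply MvPolynomial.ringHom_ext <;> simp
  exact congrArg (fun f => f P) this

lemma eval_lower (r : σ → ℕ) (p q : σ → ℤ) (hq : ∀ l, 1 ≤ q l) (G : MvPolynomial σ ℝ) (hG : IsInt G)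
    (hd : SuppIn (degP r) G) (h0 : eval (fun l => (p l : ℝ) / q l) G ≠ 0) :
    1 ≤ |eval (fun l => (p l : ℝ) / q l) G| * ∏ l, (q l : ℝ) ^ r l := by
  choose z hz using hG
  have hqr : ∀ l, (0:ℝ) < q l := fun l => by exact_mod_cast hq l
  have h1 : eval (fun l => (p l : ℝ) / q l) G * ∏ l, (q l : ℝ) ^ r l
      = ((∑ J ∈ G.support, z J * ∏ l, (p l ^ J l * q l ^ (r l - J l)) : ℤ) : ℝ) := by
    rw [eval_eq', Finset.sum_mul]
    push_cast
    refine Finset.sum_congr rfl fun J hJ => ?_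
    rw [hz, mul_assoc, ← Finset.prod_mul_distrib]
    congr 1
    refine Finset.prod_congr rfl fun l _ => ?_
    have hle : J l ≤ r l := hd J (by simpa using hJ) l
    have hne := (hqr l).ne'
    rw [div_pow, div_mul_eq_mul_div, div_eq_iff (pow_ne_zero _ hne), mul_assoc, ← pow_add, Nat.sub_add_cancel hle]
  have hpos : 0 < ∏ l, (q l : ℝ) ^ r l := Finset.prod_pos fun l _ => pow_pos (hqr l) _
  rw [← abs_of_pos hpos, ← abs_mul, h1]
  rw [← Int.cast_abs]
  have : (∑ J ∈ G.support, z J * ∏ l, (p l ^ J l * q l ^ (r l - J l)) : ℤ) ≠ 0 := by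
    intro h
    rw [h] at h1
    simp at h1
    rcases h1 with h1 | h1
    · exact h0 h1
    · exact hpos.ne' h1
  exact_mod_cast Int.one_le_abs this

lemma eval_upper (r : σ → ℕ) (α Λ θ : ℝ) (β : σ → ℝ) (q : σ → ℤ) (hq : ∀ l, 1 ≤ q l) (hr : ∀ l, 1 ≤ r l) (hΛ : 0 < Λ)
    (hrq : ∀ l, Λ ≤ r l * Real.log (q l)) (hβ : ∀ l, |α - β l| < 1 / (q l : ℝ) ^ 3)
    (G : MvPolynomial σ ℝ) (hG : IndGE r (fun _ => α) θ G) :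
    |eval β G| ≤ nm (shift (fun _ => α) G) * Real.exp (-(3 * Λ * θ)) := by
  have h1 : eval β G = eval (fun l => β l - α) (shift (fun _ => α) G) := by
    rw [eval_shift]; congr 2; funext l; ring
  rw [h1, eval_eq', nm, Finset.sum_mul]
  refine (Finset.abs_sum_le_sum_abs _ _).trans (Finset.sum_le_sum fun K hK => ?_)
  rw [abs_mul]
  refine mul_le_mul_of_nonneg_left ?_ (abs_nonneg _)
  have hK' := hG K (by simpa using hK)
  rw [Finset.abs_prod]
  calc ∏ l, |(β l - α) ^ K l| ≤ ∏ l, Real.exp (-(3 * Λ * (K l / r l))) := by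
        refine Finset.prod_le_prod (fun _ _ => abs_nonneg _) fun l _ => ?_
        have hql : (0:ℝ) < q l := by exact_mod_cast hq l
        have hrl : (0:ℝ) < r l := by exact_mod_cast hr l
        have h2 : |β l - α| ≤ Real.exp (-(3 * Real.log (q l))) := by
          rw [abs_sub_comm]
          refine (hβ l).le.trans (le_of_eq ?_)
          rw [Real.exp_neg, mul_comm, Real.exp_mul, Real.exp_log hql, one_div]
          norm_cast
        rw [abs_pow]
        calc _ ≤ Real.exp (-(3 * Real.log (q l))) ^ K l := by gcongr
          _ = Real.exp (K l * -(3 * Real.log (q l))) := (Real.exp_nat_mul _ _).symm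
          _ ≤ _ := by
            refine Real.exp_le_exp.2 ?_
            have h3 : Λ * (K l / r l) ≤ K l * Real.log (q l) := by
              calc Λ * (K l / r l) ≤ (r l * Real.log (q l)) * (K l / r l) := by
                    have := hrq l; gcongr
                _ = _ := by field_simp
            linarith
    _ = Real.exp (-(3 * Λ * wt r K)) := by
        rw [← Real.exp_sum, Finset.sum_neg_distrib, ← Finset.mul_sum]; rfl
    _ ≤ _ := by
        refine Real.exp_le_exp.2 ?_
        have : 3 * Λ * θ ≤ 3 * Λ * wt r K := by
          have : θ ≤ wt r K := hK'
          gcongr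
        linarith

end

lemma sequ (α K L : ℝ) (hK : 1 ≤ K) (hL : 0 < L)
    (H : ∀ Q : ℝ, ∃ p q : ℤ, 1 ≤ q ∧ IsCoprime p q ∧ Q ≤ Real.log q ∧ |α - (p : ℝ) / q| < 1 / (q : ℝ) ^ 3) :
    ∃ p q : ℕ → ℤ, (∀ l, 1 ≤ q l ∧ IsCoprime (p l) (q l) ∧ L ≤ Real.log (q l) ∧
      |α - (p l : ℝ) / q l| < 1 / (q l : ℝ) ^ 3) ∧ ∀ l l', l < l' → K * Real.log (q l) ≤ Real.log (q l') := by
  choose p q h1 h2 h3 h4 using H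
  let x : ℕ → ℝ := fun n => Nat.rec L (fun _ y => K * Real.log (q y)) n
  have hx0 : x 0 = L := rfl
  have hxs : ∀ n, x (n + 1) = K * Real.log (q (x n)) := fun n => rfl
  have hxL : ∀ n, L ≤ x n := by
    intro n
    induction n with
    | zero => exact le_rfl
    | succ n ih => rw [hxs]; have := h3 (x n); nlinarith
  refine ⟨fun n => p (x n), fun n => q (x n), fun l => ⟨h1 _, h2 _, (hxL l).trans (h3 _), h4 _⟩, ?_⟩
  intro l l' hl
  induction l', hl using Nat.le_induction with
  | base => have := h3 (x (l + 1)); rw [hxs] at this; exact this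
  | succ n hn ih =>
    have h5 := h3 (x (n + 1))
    rw [hxs] at h5
    have h6 : 0 < Real.log (q (x n)) := by linarith [h3 (x n), hxL n]
    simp only at ih ⊢
    rw [hxs]
    nlinarith

lemma log_nm_shift {σ : Type*} [Fintype σ] [DecidableEq σ] (r : σ → ℕ) (α C₀ : ℝ) (hC : 1 ≤ C₀) (P : MvPolynomial σ ℝ)
    (hP : SuppIn (degP r) P) (hnm : nm P ≤ (8 * C₀) ^ (∑ l, r l)) (J : σ →₀ ℕ) :
    nm (shift (fun _ => α) (hasse J P)) ≤ (16 * C₀ * (1 + |α|)) ^ (∑ l, r l) := by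
  have h1 := nm_hasse hP J
  have h2 := nm_shift (SuppIn.hasse hP J) (fun _ => α) |α| (fun _ => le_rfl)
  have ha := abs_nonneg α
  calc _ ≤ _ := h2
    _ ≤ (1 + |α|) ^ (∑ l, r l) * (2 ^ (∑ l, r l) * (8 * C₀) ^ (∑ l, r l)) := by gcongr; exact h1.trans (by gcongr)
    _ = _ := by rw [← mul_pow, ← mul_pow]; congr 1; ring

theorem roth (α : ℝ) (hα : IsIntegral ℤ α) : ∃ Q : ℝ, ∀ p q : ℤ, 1 ≤ q → IsCoprime p q → Q ≤ Real.log q →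
    1 / (q : ℝ) ^ 3 ≤ |α - (p : ℝ) / q| := by
  by_contra hcon
  push Not at hcon
  obtain ⟨d, C₀, hC, c, hc⟩ := powred α hα
  -- choose m
  obtain ⟨m, hm1, hm⟩ : ∃ m : ℕ, 1 ≤ m ∧ 2 * ((d : ℝ) + 1) * Real.exp (-(1 / 50) * m) ≤ 1 := by
    obtain ⟨n, hn⟩ := exists_nat_ge (50 * (2 * ((d : ℝ) + 1)))
    have hd0 : (0:ℝ) ≤ d := Nat.cast_nonneg d
    refine ⟨n, ?_, ?_⟩
    · by_contra h
      have : n = 0 := by omega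
      subst this
      simp at hn
      linarith
    · have h1 := Real.add_one_le_exp ((1 / 50) * (n : ℝ))
      have h2 : 2 * ((d : ℝ) + 1) ≤ Real.exp ((1 / 50) * (n : ℝ)) := by linarith
      rw [neg_mul, Real.exp_neg, ← div_eq_mul_inv, div_le_one (Real.exp_pos _)]
      exact h2
  have hm0 : (1:ℝ) ≤ m := by exact_mod_cast hm1
  obtain ⟨δ, hδ, hRL⟩ := roth_lemma (Finset.univ : Finset (Fin m)) (1 / 100) (by norm_num) (by norm_num)
  set D := 16 * C₀ * (1 + |α|) with hD
  have hD1 : 8 * C₀ ≤ D := by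
    have := abs_nonneg α
    rw [hD]; nlinarith
  have hDlog : 0 < Real.log D := Real.log_pos (by linarith)
  have h8log : Real.log (8 * C₀) ≤ Real.log D := Real.log_le_log (by linarith) hD1
  set L := 2 / δ + 2 * m * Real.log D / δ + 200 * m * Real.log D with hL
  have hLa : 2 / δ ≤ L := by rw [hL]; have : 0 ≤ 2 * m * Real.log D / δ := by positivity
                             have : 0 ≤ 200 * m * Real.log D := by positivity
                             linarith
  have hLb : 2 * m * Real.log D / δ ≤ L := by rw [hL]; have : 0 ≤ 2 / δ := by positivity
                                              have : 0 ≤ 200 * m * Real.log D := by positivity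
                                              linarith
  have hLc : 200 * m * Real.log D ≤ L := by rw [hL]; have : 0 ≤ 2 / δ := by positivity
                                            have : 0 ≤ 2 * m * Real.log D / δ := by positivity
                                            linarith
  have hL0 : 0 < L := lt_of_lt_of_le (by positivity) hLa
  clear_value L
  obtain ⟨p', q', hpq', hgrow⟩ := sequ α (2 / δ + 1) L (by have : 0 ≤ 2 / δ := by positivity
                                                           linarith) hL0
    (fun Q => by obtain ⟨p, q, h1, h2, h3, h4⟩ := hcon Q; exact ⟨p, q, h1, h2, h3, h4⟩)
  set p : Fin m → ℤ := fun l => p' l with hp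
  set q : Fin m → ℤ := fun l => q' l with hq
  have hpq : ∀ l : Fin m, 1 ≤ q l ∧ IsCoprime (p l) (q l) ∧ L ≤ Real.log (q l) ∧
      |α - (p l : ℝ) / q l| < 1 / (q l : ℝ) ^ 3 := fun l => hpq' l
  have hg : ∀ l l' : Fin m, l < l' → (2 / δ + 1) * Real.log (q l) ≤ Real.log (q l') := fun l l' h => hgrow l l' h
  have hlp : ∀ l, 0 < Real.log (q l) := fun l => lt_of_lt_of_le hL0 (hpq l).2.2.1
  set Λ : ℝ := 1 + 20 * ∑ l, Real.log (q l) with hΛ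
  have hsum0 : 0 ≤ ∑ l, Real.log (q l) := Finset.sum_nonneg fun l _ => (hlp l).le
  have hΛ0 : 0 < Λ := by rw [hΛ]; linarith
  have hΛl : ∀ l, 20 * Real.log (q l) ≤ Λ := by
    intro l
    have := Finset.single_le_sum (f := fun l => Real.log (q l)) (fun l _ => (hlp l).le) (Finset.mem_univ l)
    rw [hΛ]; linarith
  clear_value Λ
  set r : Fin m → ℕ := fun l => ⌈Λ / Real.log (q l)⌉₊ with hrdef
  have hr1 : ∀ l, Λ ≤ r l * Real.log (q l) := by
    intro l
    rw [← div_le_iff₀ (hlp l)]; exact Nat.le_ceil _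
  have hr2 : ∀ l, r l * Real.log (q l) ≤ 21 / 20 * Λ := by
    intro l
    have h1 : (r l : ℝ) < Λ / Real.log (q l) + 1 := Nat.ceil_lt_add_one (by have := hlp l; positivity)
    have h2 : (r l : ℝ) * Real.log (q l) ≤ (Λ / Real.log (q l) + 1) * Real.log (q l) :=
      mul_le_mul_of_nonneg_right h1.le (hlp l).le
    rw [add_mul, div_mul_cancel₀ _ (hlp l).ne'] at h2
    have := hΛl l
    linarith
  have hr : ∀ l, 1 ≤ r l := fun l => Nat.one_le_ceil_iff.2 (div_pos hΛ0 (hlp l))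
  have hrL : ∀ l, (r l : ℝ) * L ≤ 2 * Λ := by
    intro l
    have h1 : (r l : ℝ) * L ≤ r l * Real.log (q l) := mul_le_mul_of_nonneg_left (hpq l).2.2.1 (Nat.cast_nonneg _)
    have := hr2 l
    linarith
  have hsr : ((∑ l, r l : ℕ) : ℝ) * L ≤ m * (2 * Λ) := by
    push_cast
    rw [Finset.sum_mul]
    calc _ ≤ ∑ l : Fin m, 2 * Λ := Finset.sum_le_sum fun l _ => hrL l
      _ = _ := by simp
  clear_value r
  obtain ⟨P, hPi, hP0, hPd, hPind, hPnm⟩ := aux_poly hm1 α d C₀ hC c hc hm r hr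
  have hs0 : (0:ℝ) ≤ ((∑ l, r l : ℕ) : ℝ) := Nat.cast_nonneg _
  have hlogP : Real.log (nm P) ≤ δ * Λ := by
    have h1 : Real.log (nm P) ≤ ((∑ l, r l : ℕ) : ℝ) * Real.log D := by
      calc _ ≤ Real.log ((8 * C₀) ^ (∑ l, r l)) := Real.log_le_log (nm_pos hP0) hPnm
        _ = ((∑ l, r l : ℕ) : ℝ) * Real.log (8 * C₀) := Real.log_pow _ _
        _ ≤ _ := by gcongr
    have h2 : ((∑ l, r l : ℕ) : ℝ) * (2 * m * Real.log D / δ) ≤ m * (2 * Λ) :=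
      (mul_le_mul_of_nonneg_left hLb hs0).trans hsr
    rw [mul_div_assoc', div_le_iff₀ hδ] at h2
    have h3 : 2 * m * (((∑ l, r l : ℕ) : ℝ) * Real.log D) ≤ 2 * m * (δ * Λ) := by linarith
    exact h1.trans (le_of_mul_le_mul_left h3 (by positivity))
  obtain ⟨J, hJw, hJ⟩ := hRL r p q Λ P hr hΛ0 (by
    intro l _ l' _ hll
    have h1 := hg l l' hll
    have h2 := hr1 l
    have h3 := hr2 l'
    have h4 : (r l' : ℝ) * ((2 / δ) * Real.log (q l)) ≤ 21 / 20 * Λ := by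
      refine le_trans (mul_le_mul_of_nonneg_left ?_ (Nat.cast_nonneg _)) h3
      have := hlp l
      linarith
    have h5 : (r l' : ℝ) * ((2 / δ) * Real.log (q l)) ≤ 2 * (r l * Real.log (q l)) := by linarith
    have h6 : ((r l' : ℝ) * (2 / δ)) * Real.log (q l) ≤ (2 * r l) * Real.log (q l) := by linarith
    have h7 := le_of_mul_le_mul_right h6 (hlp l)
    rw [mul_div_assoc', div_le_iff₀ hδ] at h7
    linarith) (by
    intro l _
    refine ⟨(hpq l).1, (hpq l).2.1, ?_, hr1 l⟩
    have h1 : (r l : ℝ) * (2 / δ) ≤ 2 * Λ := (mul_le_mul_of_nonneg_left hLa (Nat.cast_nonneg _)).trans (hrL l)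
    rw [mul_div_assoc', div_le_iff₀ hδ] at h1
    linarith) hPi hP0 (by simpa using hPd) hlogP
  rw [coeff_shift_eq] at hJ
  have hlow := eval_lower r p q (fun l => (hpq l).1) (hasse J P) (hPi.hasse J) (SuppIn.hasse hPd J) hJ
  have hup := eval_upper r α Λ (2 / 5 * m - 1 / 100) (fun l => (p l : ℝ) / q l) q (fun l => (hpq l).1) hr hΛ0 hr1
    (fun l => (hpq l).2.2.2) (hasse J P) ((hPind.hasse J).mono (by linarith))
  have hnm2 := log_nm_shift r α C₀ hC P hPd hPnm J
  rw [← hD] at hnm2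
  have hD0 : 0 < D := by linarith
  have e1 : D ^ (∑ l, r l) = Real.exp (((∑ l, r l : ℕ) : ℝ) * Real.log D) := by
    rw [Real.exp_nat_mul, Real.exp_log hD0]
  have e2 : ∏ l, (q l : ℝ) ^ r l ≤ Real.exp (m * (21 / 20 * Λ)) := by
    have h1 : ∀ l, (q l : ℝ) ^ r l = Real.exp (r l * Real.log (q l)) := by
      intro l
      have : (0:ℝ) < q l := by exact_mod_cast (hpq l).1
      rw [Real.exp_nat_mul, Real.exp_log this]
    simp only [h1]
    rw [← Real.exp_sum]
    refine Real.exp_le_exp.2 ?_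
    calc _ ≤ ∑ l : Fin m, 21 / 20 * Λ := Finset.sum_le_sum fun l _ => hr2 l
      _ = _ := by simp
  have h3 : ((∑ l, r l : ℕ) : ℝ) * Real.log D ≤ Λ / 100 := by
    have h2 : ((∑ l, r l : ℕ) : ℝ) * (200 * m * Real.log D) ≤ m * (2 * Λ) :=
      (mul_le_mul_of_nonneg_left hLc hs0).trans hsr
    have h3 : 200 * m * (((∑ l, r l : ℕ) : ℝ) * Real.log D) ≤ 200 * m * (Λ / 100) := by linarith
    exact le_of_mul_le_mul_left h3 (by positivity)
  have hfin : (1:ℝ) ≤ Real.exp (Λ / 100) * Real.exp (-(3 * Λ * (2 / 5 * m - 1 / 100))) * Real.exp (m * (21 / 20 * Λ)) := by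
    refine hlow.trans (mul_le_mul ?_ e2 (Finset.prod_nonneg fun l _ => ?_) (by positivity))
    · refine hup.trans (mul_le_mul_of_nonneg_right ?_ (Real.exp_pos _).le)
      rw [e1] at hnm2
      exact hnm2.trans (Real.exp_le_exp.2 h3)
    · have : (0:ℝ) < q l := by exact_mod_cast (hpq l).1
      positivity
  rw [← Real.exp_add, ← Real.exp_add, Real.one_le_exp_iff] at hfin
  nlinarith

end RothAux

open Filter Finset MeasureTheory
set_option linter.all false
set_option linter.unusedSectionVars false
set_option linter.unusedSimpArgs false
namespace RothAux

lemma small_den (t : ℝ) (hirr : Irrational t) (B : ℕ) : ∃ ε > 0, ∀ x : ℚ, x.den ≤ B → ε ≤ |t - x| := by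
  induction B with
  | zero => exact ⟨1, one_pos, fun x hx => by have := x.den_pos; omega⟩
  | succ B ih =>
    obtain ⟨ε, hε, h⟩ := ih
    have hb : (0:ℝ) < (B + 1 : ℕ) := by positivity
    have h0 : 0 < |((B + 1 : ℕ) : ℝ) * t - round (((B + 1 : ℕ) : ℝ) * t)| := by
      refine abs_pos.2 (sub_ne_zero.2 ?_)
      exact (hirr.natCast_mul (by omega : B + 1 ≠ 0)).ne_int _
    refine ⟨min ε (|((B + 1 : ℕ) : ℝ) * t - round (((B + 1 : ℕ) : ℝ) * t)| / (B + 1 : ℕ)), lt_min hε (div_pos h0 hb), ?_⟩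
    intro x hx
    rcases Nat.lt_or_ge x.den (B + 1) with h1 | h1
    · exact (min_le_left _ _).trans (h x (by omega))
    · have h2 : x.den = B + 1 := by omega
      refine (min_le_right _ _).trans ?_
      rw [div_le_iff₀ hb]
      refine (round_le _ x.num).trans (le_of_eq ?_)
      have h3 : (x : ℝ) = x.num / (B + 1 : ℕ) := by
        rw [← h2]; exact_mod_cast (Rat.num_div_den x).symm
      rw [h3, ← abs_of_pos hb, ← abs_mul, abs_of_pos hb]
      congr 1
      field_simp

lemma roth_all (t : ℝ) (hirr : Irrational t) (halg : IsAlgebraic ℚ t) :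
    ∃ c > 0, ∀ x : ℚ, c / (x.den : ℝ) ^ 3 ≤ |t - x| := by
  have h1 : IsAlgebraic ℤ t := (IsFractionRing.isAlgebraic_iff ℤ ℚ ℝ).2 halg
  obtain ⟨D, hD, hint⟩ := h1.exists_integral_multiple
  obtain ⟨Q, hQ⟩ := roth _ hint
  have hDn : 0 < D.natAbs := Int.natAbs_pos.2 hD
  have hDr : (0:ℝ) < |(D : ℝ)| := abs_pos.2 (by exact_mod_cast hD)
  obtain ⟨B, hB⟩ := exists_nat_ge ((D.natAbs : ℝ) * Real.exp Q)
  obtain ⟨ε, hε, hsmall⟩ := small_den t hirr B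
  refine ⟨min ε (1 / |(D : ℝ)|), lt_min hε (by positivity), ?_⟩
  intro x
  have hxd : (1:ℝ) ≤ x.den := by exact_mod_cast x.den_pos
  by_cases hx : x.den ≤ B
  · calc _ ≤ ε / (x.den : ℝ) ^ 3 := by gcongr; exact min_le_left _ _
      _ ≤ ε := div_le_self hε.le (one_le_pow₀ hxd)
      _ ≤ _ := hsmall x hx
  · push Not at hx
    have hxB : (B : ℝ) < x.den := by exact_mod_cast hx
    set y : ℚ := (D : ℚ) * x with hy
    have hy1 : y.den ≤ x.den := by
      have := Rat.mul_den_dvd (D : ℚ) x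
      rw [Rat.den_intCast, one_mul] at this
      exact Nat.le_of_dvd x.den_pos this
    have hy2 : x.den ≤ D.natAbs * y.den := by
      have hxy : x = (D : ℚ)⁻¹ * y := by
        rw [hy, inv_mul_cancel_left₀]; exact_mod_cast hD
      have := Rat.mul_den_dvd (D : ℚ)⁻¹ y
      rw [← hxy, Rat.inv_intCast_den, if_neg hD] at this
      exact Nat.le_of_dvd (Nat.mul_pos hDn y.den_pos) this
    have hy0 : (0:ℝ) < y.den := by exact_mod_cast y.den_pos
    have hlog : Q ≤ Real.log (y.den : ℝ) := by
      rw [Real.le_log_iff_exp_le hy0]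
      have h3 : (x.den : ℝ) ≤ D.natAbs * y.den := by exact_mod_cast hy2
      have h4 : (D.natAbs : ℝ) * Real.exp Q ≤ D.natAbs * y.den := by linarith
      exact le_of_mul_le_mul_left h4 (by exact_mod_cast hDn)
    have h5 := hQ y.num y.den (by exact_mod_cast y.den_pos) (by
      rw [Int.isCoprime_iff_gcd_eq_one]; exact y.reduced) (by simpa using hlog)
    have h6 : D • t - ((y.num : ℤ) : ℝ) / ((y.den : ℤ) : ℝ) = D * (t - x) := by
      have : ((y.num : ℤ) : ℝ) / ((y.den : ℤ) : ℝ) = (y : ℝ) := by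
        exact_mod_cast (Rat.num_div_den y)
      rw [this, hy, zsmul_eq_mul]
      push_cast
      ring
    rw [h6, abs_mul] at h5
    have h7 : 1 / (x.den : ℝ) ^ 3 ≤ |(D : ℝ)| * |t - x| := by
      refine le_trans ?_ h5
      have : (y.den : ℝ) ≤ x.den := by exact_mod_cast hy1
      push_cast
      gcongr
    calc min ε (1 / |(D : ℝ)|) / (x.den : ℝ) ^ 3 ≤ (1 / |(D : ℝ)|) / (x.den : ℝ) ^ 3 := by
          gcongr; exact min_le_right _ _
      _ = (1 / |(D : ℝ)|) * (1 / (x.den : ℝ) ^ 3) := by ring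
      _ ≤ (1 / |(D : ℝ)|) * (|(D : ℝ)| * |t - x|) := by gcongr
      _ = |t - x| := by field_simp

end RothAux

/-- every irrational algebraic `t ∈ [0,1]` belongs to `𝒜`. -/
theorem stmt4 (n : ℕ) (hn : 2 ≤ n) (Δ : ℝ) (hΔ0 : 0 < Δ) (hΔ1 : Δ < 1)
    (hΔ2 : n = 2 → Δ < 1 / 2) (t : ℝ) (ht : t ∈ Set.Icc (0 : ℝ) 1)
    (hirr : Irrational t) (halg : IsAlgebraic ℚ t) :
    t ∈ Aall n Δ := by
  refine ⟨ht, ?_⟩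
  obtain ⟨c, hc, hroth⟩ := RothAux.roth_all t hirr halg
  have hn3 : 0 < (n : ℝ) - 3 * Δ := by
    rcases Nat.lt_or_ge n 3 with h | h
    · have h2 : n = 2 := by omega
      have := hΔ2 h2
      subst h2
      push_cast; linarith
    · have : (3:ℝ) ≤ n := by exact_mod_cast h
      linarith
  have hev := (tendsto_rpow_atTop hn3).eventually_gt_atTop (1 / c)
  obtain ⟨M₁, hM₁⟩ := Filter.eventually_atTop.1 hev
  refine ⟨max 1 M₁, fun M hM => ?_⟩
  have hM1 : 1 ≤ M := (le_max_left _ _).trans hM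
  have hM0 : 0 < M := by linarith
  have hbig := hM₁ M ((le_max_right _ _).trans hM)
  have hnΔ : 0 ≤ (n : ℝ) - Δ := by linarith
  have hX1 : 1 ≤ M ^ ((n : ℝ) - Δ) := Real.one_le_rpow hM1 hnΔ
  set X := M ^ ((n : ℝ) - Δ) with hX
  have hN : 0 < ⌊X⌋₊ := Nat.floor_pos.2 hX1
  obtain ⟨x, hx1, hx2⟩ := Real.exists_rat_abs_sub_le_and_den_le t hN
  have hNX : X < (⌊X⌋₊ : ℝ) + 1 := Nat.lt_floor_add_one X
  have hxd : (0:ℝ) < x.den := by exact_mod_cast x.den_pos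
  have hxN : (x.den : ℝ) ≤ (⌊X⌋₊ : ℝ) := by exact_mod_cast hx2
  have hfl : (⌊X⌋₊ : ℝ) ≤ X := Nat.floor_le (by linarith)
  have hxX : (x.den : ℝ) ≤ X := hxN.trans hfl
  have hxr : ((x.num : ℤ) : ℝ) / (((x.den : ℕ) : ℤ) : ℝ) = (x : ℝ) := by
    exact_mod_cast (Rat.num_div_den x)
  refine ⟨x.num, x.den, ⟨by exact_mod_cast x.den_pos, x.reduced, ?_⟩, ?_, by simpa using hxX⟩
  · rw [hxr]
    refine lt_of_le_of_lt hx1 ?_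
    push_cast
    refine one_div_lt_one_div_of_lt (by positivity) ?_
    nlinarith
  · push_cast
    by_contra hcon
    push Not at hcon
    have h1 := (hroth x).trans hx1
    rw [div_le_div_iff₀ (by positivity) (by positivity)] at h1
    have h2 : c * ((⌊X⌋₊ : ℝ) + 1) ≤ (x.den : ℝ) ^ 2 := by
      have : (c * ((⌊X⌋₊ : ℝ) + 1)) * x.den ≤ (x.den : ℝ) ^ 2 * x.den := by nlinarith
      exact le_of_mul_le_mul_right this hxd
    have h3 : (x.den : ℝ) ^ 2 ≤ M ^ (2 * Δ) := by
      have : M ^ (2 * Δ) = (M ^ Δ) ^ 2 := by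
        rw [mul_comm, Real.rpow_mul hM0.le]; norm_cast
      rw [this]; gcongr
    have h4 : X = M ^ ((n : ℝ) - 3 * Δ) * M ^ (2 * Δ) := by
      rw [hX, ← Real.rpow_add hM0]; congr 1; ring
    have h5 : c * X < M ^ (2 * Δ) := by nlinarith
    rw [h4] at h5
    have h6 : 0 < M ^ (2 * Δ) := Real.rpow_pos_of_pos hM0 _
    have h7 : 1 < c * M ^ ((n : ℝ) - 3 * Δ) := by
      rw [div_lt_iff₀ hc] at hbig; linarith
    nlinarith
end

section
/- If t ∈ 𝒜 then the partial sums S_K(t,x) = Σ_{0<|k|≤K} e(t·k^n + x·k)/k converge uniformly in x ∈ ℝ as K → ∞: there is a function S: ℝ → ℂ such that sup_{x∈ℝ} |S_K(t,x) − S(x)| → 0 as K → ∞. -/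
open Filter Finset MeasureTheory

/-- `e(ξ) = exp(2πiξ)`. -/
noncomputable def ee (ξ : ℝ) : ℂ := Complex.exp (2 * Real.pi * Complex.I * ξ)

/-- The symmetric partial sum `S_K(t,x) = Σ_{0<|k|≤K} e(t·k^n + x·k)/k`. -/
noncomputable def SK (n : ℕ) (t x : ℝ) (K : ℕ) : ℂ :=
  ∑ k ∈ (Finset.Icc (-(K : ℤ)) (K : ℤ)).filter (· ≠ 0),
    ee (t * (k : ℝ) ^ n + x * (k : ℝ)) / (k : ℂ)

lemma ee_add (a b : ℝ) : ee (a + b) = ee a * ee b := by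
  unfold ee; rw [← Complex.exp_add]; congr 1; push_cast; ring

lemma ee_zero : ee 0 = 1 := by simp [ee]

lemma norm_ee (a : ℝ) : ‖ee a‖ = 1 := by
  unfold ee
  have : (2 * Real.pi * Complex.I * a : ℂ) = ((2 * Real.pi * a : ℝ) : ℂ) * Complex.I := by
    push_cast; ring
  rw [this, Complex.norm_exp_ofReal_mul_I]

lemma ee_int (k : ℤ) : ee k = 1 := by
  unfold ee
  rw [Complex.exp_eq_one_iff]
  exact ⟨k, by push_cast; ring⟩

lemma conj_ee (a : ℝ) : (starRingEnd ℂ) (ee a) = ee (-a) := by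
  unfold ee
  rw [← Complex.exp_conj]
  congr 1
  have h2 : (starRingEnd ℂ) 2 = 2 := Complex.conj_ofNat 2
  simp [h2]

lemma ee_sub_one (a : ℝ) : 4 * |a - round a| ≤ ‖ee a - 1‖ := by
  have h1 : ee a = ee (a - round a) := by
    have := ee_add (a - round a) (round a)
    rw [ee_int, mul_one, sub_add_cancel] at this
    exact this
  rw [h1]
  set b := a - round a with hb
  have hb2 : |b| ≤ 1 / 2 := abs_sub_round a
  have h2 : ee b = Complex.exp (Complex.I * ((2 * Real.pi * b : ℝ) : ℂ)) := by
    unfold ee; congr 1; push_cast; ring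
  rw [h2, Complex.norm_exp_I_mul_ofReal_sub_one]
  have h3 : 2 * Real.pi * b / 2 = Real.pi * b := by ring
  rw [h3, norm_mul, Real.norm_eq_abs, Real.norm_eq_abs]
  have hpi := Real.pi_pos
  have h4 : |Real.pi * b| ≤ Real.pi / 2 := by
    rw [abs_mul, abs_of_pos hpi]; nlinarith
  have h5 := Real.mul_abs_le_abs_sin h4
  rw [abs_mul Real.pi, abs_of_pos hpi] at h5
  have h6 : 2 / Real.pi * (Real.pi * |b|) = 2 * |b| := by field_simp
  rw [h6] at h5
  rw [abs_of_pos (by norm_num : (0:ℝ) < 2)]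
  linarith

/-- majorant for linear sums -/
noncomputable def mm (N : ℕ) (θ : ℝ) : ℝ := 2 * N / (1 + 2 * N * |θ - round θ|)

lemma mm_nonneg (N : ℕ) (θ : ℝ) : 0 ≤ mm N θ := by unfold mm; positivity

lemma mm_le (N : ℕ) (θ : ℝ) : mm N θ ≤ 2 * N := by
  unfold mm
  apply div_le_self (by positivity)
  have : 0 ≤ 2 * (N:ℝ) * |θ - round θ| := by positivity
  linarith

lemma linear_bound (N L : ℕ) (hL : L ≤ N) (α β : ℝ) :
    ‖∑ i ∈ range L, ee (α * i + β)‖ ≤ mm N α := by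
  have h1 : ‖∑ i ∈ range L, ee (α * i + β)‖ ≤ N := by
    refine (norm_sum_le _ _).trans ?_
    simp only [norm_ee, sum_const, card_range, nsmul_eq_mul, mul_one]
    exact_mod_cast hL
  have h2 : (∑ i ∈ range L, ee (α * i + β)) * (ee α - 1) = ee (α * L + β) - ee β := by
    rw [Finset.sum_mul]
    have : ∀ i ∈ range L, ee (α * i + β) * (ee α - 1)
        = ee (α * ((i + 1 : ℕ) : ℝ) + β) - ee (α * (i : ℕ) + β) := by
      intro i _
      rw [mul_sub, mul_one, ← ee_add]; congr 2; push_cast; ring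
    rw [Finset.sum_congr rfl this, Finset.sum_range_sub (fun i : ℕ => ee (α * i + β))]
    simp
  have h3 : ‖∑ i ∈ range L, ee (α * i + β)‖ * (4 * |α - round α|) ≤ 2 := by
    calc _ ≤ ‖∑ i ∈ range L, ee (α * i + β)‖ * ‖ee α - 1‖ := by
          gcongr; exact ee_sub_one α
      _ = ‖ee (α * L + β) - ee β‖ := by rw [← norm_mul, h2]
      _ ≤ 2 := by
          refine (norm_sub_le _ _).trans ?_
          rw [norm_ee, norm_ee]; norm_num
  unfold mm
  rw [le_div_iff₀ (by positivity)]
  have hN : (0:ℝ) ≤ N := by positivity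
  nlinarith [mul_le_mul_of_nonneg_left h3 hN]

lemma diff_aux (z : ℕ → ℂ) (L : ℕ) :
    ‖∑ i ∈ range L, z i‖ ^ 2 ≤
      2 * (∑ j ∈ range L, ∑ i ∈ range (j + 1), z j * (starRingEnd ℂ) (z i)).re := by
  induction L with
  | zero => simp
  | succ L ih =>
    rw [Finset.sum_range_succ, Finset.sum_range_succ]
    set S := ∑ i ∈ range L, z i with hS
    rw [← Finset.mul_sum, Finset.sum_range_succ, ← map_sum, ← hS, Complex.add_re, ← map_add]
    have h := Complex.sq_norm (S + z L)
    have h' := Complex.sq_norm S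
    rw [h]
    rw [h'] at ih
    rw [Complex.normSq_apply] at ih ⊢
    simp only [Complex.add_re, Complex.add_im, Complex.mul_re, Complex.conj_re,
      Complex.conj_im] at ih ⊢
    nlinarith [sq_nonneg (z L).re, sq_nonneg (z L).im]

lemma differencing (z : ℕ → ℂ) (L : ℕ) :
    ‖∑ i ∈ range L, z i‖ ^ 2 ≤
      2 * ∑ h ∈ range L, ‖∑ i ∈ range (L - h), z (i + h) * (starRingEnd ℂ) (z i)‖ := by
  refine (diff_aux z L).trans ?_
  have h1 : ∑ j ∈ range L, ∑ i ∈ range (j + 1), z j * (starRingEnd ℂ) (z i)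
      = ∑ h ∈ range L, ∑ i ∈ range (L - h), z (i + h) * (starRingEnd ℂ) (z i) := by
    rw [← Finset.sum_range_diag_flip L (fun h i => z (i + h) * (starRingEnd ℂ) (z i))]
    refine Finset.sum_congr rfl fun j _ => ?_
    rw [← Finset.sum_range_reflect]
    refine Finset.sum_congr rfl fun i hi => ?_
    rw [Finset.mem_range] at hi
    have e1 : j + 1 - 1 - i = j - i := by omega
    have e2 : j - i + i = j := by omega
    rw [e1, e2]
  rw [h1]
  have := (Complex.re_le_norm
    (∑ h ∈ range L, ∑ i ∈ range (L - h), z (i + h) * (starRingEnd ℂ) (z i))).trans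
    (norm_sum_le _ _)
  linarith

open Polynomial in
lemma poly_diff (P : Polynomial ℝ) (j : ℕ) (α h : ℝ) (hd : P.natDegree ≤ j + 1)
    (hc : P.coeff (j + 1) = α) :
    (taylor h P - P).natDegree ≤ j ∧ (taylor h P - P).coeff j = (j + 1) * h * α := by
  have hT : ∀ k, (hasseDeriv k P).natDegree ≤ j + 1 - k := fun k =>
    (natDegree_hasseDeriv_le P k).trans (by omega)
  constructor
  · rw [natDegree_le_iff_coeff_eq_zero]
    intro k hk
    rw [coeff_sub, taylor_coeff]
    have h0 : (hasseDeriv k P).natDegree ≤ 0 := (hT k).trans (by omega)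
    rw [eq_C_of_natDegree_le_zero h0, eval_C, hasseDeriv_coeff]
    simp
  · rw [coeff_sub, taylor_coeff]
    have h0 : (hasseDeriv j P).natDegree ≤ 1 := (hT j).trans (by omega)
    rw [eq_X_add_C_of_natDegree_le_one h0]
    simp only [hasseDeriv_coeff, eval_add, eval_mul, eval_C, eval_X]
    have e : 1 + j = j + 1 := by omega
    rw [e, hc]
    simp
    ring

/-- iterated multiplicative averaging -/
noncomputable def UU (N : ℕ) : ℕ → (ℕ → ℝ) → ℝ
  | 0, g => g 1
  | (j + 1), g => ∑ h ∈ range N, UU N j (fun k => g (h * k))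

lemma weyl (N : ℕ) (hN : 1 ≤ N) (j : ℕ) : ∀ (L : ℕ), L ≤ N → ∀ (α : ℝ) (P : Polynomial ℝ),
    P.natDegree ≤ j + 1 → P.coeff (j + 1) = α →
    ‖∑ i ∈ range L, ee (P.eval (i : ℝ))‖ ^ (2 ^ j) * (N : ℝ) ^ (j + 1) ≤
      2 ^ (2 ^ j) * (N : ℝ) ^ (2 ^ j) *
        UU N j (fun k => mm N (((j + 1).factorial * k : ℕ) * α)) := by
  have hN0 : (0 : ℝ) < N := by exact_mod_cast hN
  induction j with
  | zero =>
    intro L hL α P hd hc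
    have h1 : ∀ i : ℕ, P.eval (i : ℝ) = α * i + P.coeff 0 := by
      intro i
      conv_lhs => rw [Polynomial.eq_X_add_C_of_natDegree_le_one hd]
      simp at hc
      simp [hc]
    simp only [h1, UU]
    have h2 := linear_bound N L hL α (P.coeff 0)
    simp
    have := mm_nonneg N α
    nlinarith
  | succ j ih =>
    intro L hL α P hd hc
    set S := ‖∑ i ∈ range L, ee (P.eval (i : ℝ))‖ with hS
    have h1 := differencing (fun i => ee (P.eval (i : ℝ))) L
    set T : ℕ → ℝ := fun h => ‖∑ i ∈ range (L - h),
      ee ((Polynomial.taylor (h : ℝ) P - P).eval (i : ℝ))‖ with hT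
    have hTn : ∀ h, 0 ≤ T h := fun h => norm_nonneg _
    have h2 : S ^ 2 ≤ 2 * ∑ h ∈ range N, T h := by
      refine h1.trans ?_
      gcongr
      calc _ = ∑ h ∈ range L, T h := by
            refine Finset.sum_congr rfl fun h _ => ?_
            simp only [hT]
            congr 1
            refine Finset.sum_congr rfl fun i _ => ?_
            rw [conj_ee, ← ee_add, Polynomial.eval_sub, Polynomial.taylor_eval]
            push_cast
            rw [sub_eq_add_neg]
        _ ≤ _ := Finset.sum_le_sum_of_subset_of_nonneg
            (Finset.range_subset_range.2 hL) (fun _ _ _ => hTn _)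
    have h3 : (∑ h ∈ range N, T h) ^ (2 ^ j) * N ≤ N ^ (2 ^ j) * ∑ h ∈ range N, T h ^ (2 ^ j) := by
      obtain ⟨m, hm⟩ : ∃ m, 2 ^ j = m + 1 := ⟨2 ^ j - 1, by have := Nat.one_le_two_pow (n := j); omega⟩
      have h := pow_sum_div_card_le_sum_pow (s := range N) (f := T) (fun i _ => hTn i) m
      rw [hm]
      rw [div_le_iff₀ (by simp; positivity)] at h
      simp only [card_range] at h
      calc _ ≤ _ := mul_le_mul_of_nonneg_right h hN0.le
        _ = _ := by ring
    have h4 : ∀ h ∈ range N, T h ^ (2 ^ j) * (N : ℝ) ^ (j + 1) ≤ 2 ^ (2 ^ j) * (N : ℝ) ^ (2 ^ j) *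
        UU N j (fun k => mm N (((j + 1 + 1).factorial * (h * k) : ℕ) * α)) := by
      intro h _
      obtain ⟨e1, e2⟩ := poly_diff P (j + 1) α h hd hc
      have := ih (L - h) (by omega) _ _ e1 e2
      refine this.trans (le_of_eq ?_)
      congr 2
      funext k
      congr 1
      rw [Nat.factorial_succ (j + 1)]
      push_cast
      ring
    have h5 : S ^ (2 ^ (j + 1)) ≤ 2 ^ (2 ^ j) * (∑ h ∈ range N, T h) ^ (2 ^ j) := by
      rw [pow_succ', pow_mul, ← mul_pow]
      exact pow_le_pow_left₀ (by positivity) h2 _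
    calc S ^ (2 ^ (j + 1)) * (N : ℝ) ^ (j + 1 + 1)
        ≤ 2 ^ (2 ^ j) * (∑ h ∈ range N, T h) ^ (2 ^ j) * (N : ℝ) ^ (j + 1 + 1) := by gcongr
      _ = 2 ^ (2 ^ j) * N ^ (j + 1) * ((∑ h ∈ range N, T h) ^ (2 ^ j) * N) := by ring
      _ ≤ 2 ^ (2 ^ j) * N ^ (j + 1) * (N ^ (2 ^ j) * ∑ h ∈ range N, T h ^ (2 ^ j)) := by gcongr
      _ = 2 ^ (2 ^ j) * N ^ (2 ^ j) * ∑ h ∈ range N, T h ^ (2 ^ j) * N ^ (j + 1) := by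
          rw [← Finset.sum_mul]; ring
      _ ≤ 2 ^ (2 ^ j) * N ^ (2 ^ j) * ∑ h ∈ range N, (2 ^ (2 ^ j) * (N : ℝ) ^ (2 ^ j) *
            UU N j (fun k => mm N (((j + 1 + 1).factorial * (h * k) : ℕ) * α))) := by
          exact mul_le_mul_of_nonneg_left (Finset.sum_le_sum h4) (by positivity)
      _ = _ := by
          rw [← Finset.mul_sum, UU, pow_succ 2 j, pow_mul, pow_mul]
          ring

lemma divisor_local (ε : ℝ) (hε : 0 < ε) (a : ℕ) (p : ℝ) (hp : 2 ≤ p) :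
    (a : ℝ) + 1 ≤ (1 + 1 / (ε * Real.log 2)) * (p ^ a) ^ ε := by
  have hl : 0 < Real.log 2 := Real.log_pos (by norm_num)
  have h1 : ((2 : ℝ) ^ a) ^ ε ≤ (p ^ a) ^ ε := by gcongr
  have h2 : 1 + a * (ε * Real.log 2) ≤ ((2 : ℝ) ^ a) ^ ε := by
    rw [← Real.rpow_natCast, ← Real.rpow_mul (by norm_num), Real.rpow_def_of_pos (by norm_num)]
    have := Real.add_one_le_exp (Real.log 2 * (a * ε))
    linarith
  have hx : 0 < ε * Real.log 2 := by positivity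
  calc (a : ℝ) + 1 ≤ (1 + 1 / (ε * Real.log 2)) * (1 + a * (ε * Real.log 2)) := by
        have : (1 + 1 / (ε * Real.log 2)) * (1 + a * (ε * Real.log 2))
          = 1 + a + a * (ε * Real.log 2) + 1 / (ε * Real.log 2) := by field_simp; ring
        rw [this]
        have : 0 ≤ a * (ε * Real.log 2) + 1 / (ε * Real.log 2) := by positivity
        linarith
    _ ≤ _ := by gcongr; exact h2.trans h1

lemma divisor_bound (ε : ℝ) (hε : 0 < ε) :
    ∃ C : ℝ, 1 ≤ C ∧ ∀ m : ℕ, m ≠ 0 → (m.divisors.card : ℝ) ≤ C * (m : ℝ) ^ ε := by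
  have hl : 0 < Real.log 2 := Real.log_pos (by norm_num)
  set C0 : ℝ := 1 + 1 / (ε * Real.log 2) with hC0
  have hC1 : 1 ≤ C0 := by
    rw [hC0]; have : 0 < 1 / (ε * Real.log 2) := by positivity
    linarith
  obtain ⟨B, hB⟩ := exists_nat_ge ((2 : ℝ) ^ (1 / ε))
  refine ⟨C0 ^ B, one_le_pow₀ hC1, fun m hm => ?_⟩
  rw [Nat.card_divisors hm]
  push_cast
  have key : ∀ p ∈ m.primeFactors, ((m.factorization p : ℝ) + 1) ≤
      (if p < B then C0 else 1) * (((p : ℝ) ^ (m.factorization p)) ^ ε) := by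
    intro p hp
    have hp2 : (2 : ℝ) ≤ p := by exact_mod_cast (Nat.prime_of_mem_primeFactors hp).two_le
    split_ifs with h
    · exact divisor_local ε hε _ _ hp2
    · push Not at h
      rw [one_mul]
      have h1 : (2 : ℝ) ≤ (p : ℝ) ^ ε := by
        have h2 : (2 : ℝ) ^ (1 / ε) ≤ p := hB.trans (by exact_mod_cast h)
        calc (2 : ℝ) = ((2 : ℝ) ^ (1 / ε)) ^ ε := by
              rw [← Real.rpow_mul (by norm_num)]; field_simp; simp
          _ ≤ _ := by gcongr
      rw [← Real.rpow_natCast, ← Real.rpow_mul (by positivity), mul_comm,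
        Real.rpow_mul (by positivity), Real.rpow_natCast]
      calc ((m.factorization p : ℝ) + 1) ≤ 2 ^ (m.factorization p) := by
            exact_mod_cast Nat.lt_two_pow_self
        _ ≤ _ := by gcongr
  refine (Finset.prod_le_prod (fun _ _ => by positivity) key).trans ?_
  rw [Finset.prod_mul_distrib]
  have e1 : ∏ p ∈ m.primeFactors, (((p : ℝ) ^ (m.factorization p)) ^ ε) = (m : ℝ) ^ ε := by
    rw [Real.finsetProd_rpow _ _ (fun _ _ => by positivity)]
    congr 1
    have := Nat.prod_factorization_pow_eq_self hm
    conv_rhs => rw [← this]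
    rw [Finsupp.prod, Nat.support_factorization]
    push_cast
    rfl
  rw [e1]
  gcongr
  rw [Finset.prod_ite]
  simp only [Finset.prod_const, one_pow, mul_one]
  apply pow_le_pow_right₀ hC1
  calc _ ≤ (range B).card := by
        apply Finset.card_le_card
        intro p hp
        simp at hp ⊢
        exact hp.2
    _ = B := by simp

lemma UU_mono_const (N j : ℕ) : ∀ (g : ℕ → ℝ) (b : ℝ), (∀ k, g k ≤ b) →
    UU N j g ≤ (N : ℝ) ^ j * b := by
  induction j with
  | zero => intro g b hg; simpa [UU] using hg 1
  | succ j ih =>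
    intro g b hg
    rw [UU]
    calc _ ≤ ∑ h ∈ range N, (N : ℝ) ^ j * b := Finset.sum_le_sum fun h _ => ih _ _ fun k => hg _
      _ = _ := by simp; ring

lemma prod_sum_le (A B R : ℕ) (hR : A * B ≤ R) (D : ℝ)
    (hD : ∀ m ∈ Icc 1 R, (m.divisors.card : ℝ) ≤ D) (g : ℕ → ℝ) (hg : ∀ k, 0 ≤ g k) :
    ∑ h ∈ Icc 1 A, ∑ p ∈ Icc 1 B, g (h * p) ≤ D * ∑ m ∈ Icc 1 R, g m := by
  rw [← Finset.sum_product', Finset.mul_sum]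
  rw [← Finset.sum_fiberwise_of_maps_to (s := Icc 1 A ×ˢ Icc 1 B) (t := Icc 1 R)
    (g := fun x => x.1 * x.2)]
  · refine Finset.sum_le_sum fun m hm => ?_
    have : ∀ x ∈ (Icc 1 A ×ˢ Icc 1 B).filter (fun x => x.1 * x.2 = m), g (x.1 * x.2) = g m := by
      intro x hx
      rw [(Finset.mem_filter.1 hx).2]
    rw [Finset.sum_congr rfl this, Finset.sum_const, nsmul_eq_mul]
    refine mul_le_mul_of_nonneg_right (le_trans ?_ (hD m hm)) (hg m)
    norm_cast
    apply Finset.card_le_card_of_injOn (fun x => x.1)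
    · intro x hx
      simp at hx hm ⊢
      exact ⟨⟨x.2, hx.2.symm⟩, by omega⟩
    · rintro ⟨a, b⟩ hx ⟨c, d⟩ hy h
      simp at hx hy h
      subst h
      have : b = d := Nat.eq_of_mul_eq_mul_left (by omega) (hx.2.trans hy.2.symm)
      rw [this]
  · rintro ⟨a, b⟩ hx
    simp at hx ⊢
    refine ⟨Nat.mul_pos (by omega) (by omega), le_trans (Nat.mul_le_mul hx.1.2 hx.2.2) hR⟩

lemma UU_bound (N J : ℕ) (hN : 1 ≤ N) (D : ℝ) (hD1 : 0 ≤ D)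
    (hD : ∀ m ∈ Icc 1 (N ^ J), (m.divisors.card : ℝ) ≤ D) (j : ℕ) (hj : j ≤ J) :
    ∀ (g : ℕ → ℝ), (∀ k, 0 ≤ g k) → (∀ k, g k ≤ 2 * N) →
    UU N j g ≤ 2 * j * (N : ℝ) ^ j + D ^ j * ∑ p ∈ Icc 1 (N ^ j), g p := by
  induction j with
  | zero => intro g hg _; simp [UU]
  | succ j ih =>
    intro g hg hgN
    obtain ⟨A, rfl⟩ : ∃ A, N = A + 1 := ⟨N - 1, by omega⟩
    rw [UU, Finset.sum_range_succ']
    have e : ∀ F : ℕ → ℝ, ∑ i ∈ range A, F (i + 1) = ∑ i ∈ Icc 1 A, F i := by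
      intro F
      rw [Finset.range_eq_Ico, Finset.sum_Ico_add' F 0 A 1]
      rfl
    rw [e (fun h => UU (A + 1) j fun k => g (h * k))]
    have h0 : UU (A + 1) j (fun k => g (0 * k)) ≤ ((A + 1 : ℕ) : ℝ) ^ j * (2 * (A + 1 : ℕ)) :=
      UU_mono_const _ _ _ _ fun k => hgN _
    have h1 : ∑ h ∈ Icc 1 A, UU (A + 1) j (fun k => g (h * k)) ≤
        ∑ h ∈ Icc 1 A, (2 * j * ((A + 1 : ℕ) : ℝ) ^ j
          + D ^ j * ∑ p ∈ Icc 1 ((A + 1) ^ j), g (h * p)) :=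
      Finset.sum_le_sum fun h _ => ih (by omega) _ (fun k => hg _) fun k => hgN _
    have h2 := prod_sum_le A ((A + 1) ^ j) ((A + 1) ^ (j + 1))
      (by rw [pow_succ']; exact Nat.mul_le_mul_right _ (by omega)) D (fun m hm => by
        apply hD
        rw [Finset.mem_Icc] at hm ⊢
        exact ⟨hm.1, hm.2.trans (Nat.pow_le_pow_right (by omega) hj)⟩) g hg
    rw [Finset.sum_add_distrib, Finset.sum_const, Nat.card_Icc, nsmul_eq_mul,
      ← Finset.mul_sum] at h1
    have h3 := mul_le_mul_of_nonneg_left h2 (pow_nonneg hD1 j)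
    rw [← mul_assoc, ← pow_succ] at h3
    have h4 : ((A + 1 - 1 : ℕ) : ℝ) * (2 * j * ((A + 1 : ℕ) : ℝ) ^ j) ≤
        2 * j * ((A + 1 : ℕ) : ℝ) ^ (j + 1) := by
      rw [pow_succ]
      simp only [Nat.add_sub_cancel]
      push_cast
      have : (0:ℝ) ≤ 2 * j * ((A : ℝ) + 1) ^ j := by positivity
      nlinarith
    have h5 : ((A + 1 : ℕ) : ℝ) ^ j * (2 * (A + 1 : ℕ)) = 2 * ((A + 1 : ℕ) : ℝ) ^ (j + 1) := by ring
    rw [h5] at h0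
    have h6 : 2 * ((j + 1 : ℕ) : ℝ) * ((A + 1 : ℕ) : ℝ) ^ (j + 1) =
      2 * j * ((A + 1 : ℕ) : ℝ) ^ (j + 1) + 2 * ((A + 1 : ℕ) : ℝ) ^ (j + 1) := by push_cast; ring
    rw [h6]
    linarith

lemma mm_le_div (N q k : ℕ) (hq : 1 ≤ q) (θ : ℝ) (h : (k : ℝ) ≤ 2 * q * |θ - round θ|) :
    mm N θ ≤ if k = 0 then 2 * (N : ℝ) else 2 * q / k := by
  split_ifs with hk
  · exact mm_le N θ
  · have hk' : (0 : ℝ) < k := by exact_mod_cast Nat.pos_of_ne_zero hk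
    unfold mm
    have hN : (0 : ℝ) ≤ N := by positivity
    rw [div_le_div_iff₀ (by positivity) hk']
    have hq' : (0:ℝ) ≤ q := by positivity
    nlinarith [mul_le_mul_of_nonneg_left h hN]

lemma block_inj (q : ℕ) (hq : 1 ≤ q) (u : ℤ) (hu : Int.gcd u q = 1) (α : ℝ)
    (hα : |α - u / q| ≤ 1 / (q : ℝ) ^ 2) (s i i' : ℕ) (hii : i < i') (hi' : i' < (q + 1) / 2)
    (h : ⌊2 * q * Int.fract (((s + i : ℕ) : ℝ) * α)⌋₊ = ⌊2 * q * Int.fract (((s + i' : ℕ) : ℝ) * α)⌋₊) :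
    False := by
  have hq0 : (0 : ℝ) < q := by exact_mod_cast hq
  set x := ((s + i : ℕ) : ℝ) * α with hx
  set y := ((s + i' : ℕ) : ℝ) * α with hy
  have fx := Int.fract_nonneg x
  have fy := Int.fract_nonneg y
  have a1 := Nat.floor_le (a := 2 * q * Int.fract x) (by positivity)
  have a2 := Nat.lt_floor_add_one (2 * q * Int.fract x)
  have b1 := Nat.floor_le (a := 2 * q * Int.fract y) (by positivity)
  have b2 := Nat.lt_floor_add_one (2 * q * Int.fract y)
  rw [h] at a1 a2
  have c : |2 * q * (Int.fract y - Int.fract x)| < 1 := by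
    rw [abs_lt]; constructor <;> linarith
  obtain ⟨d, rfl⟩ : ∃ d, i' = i + d := ⟨i' - i, by omega⟩
  have hd : 1 ≤ d := by omega
  have hdq : 2 * d + 1 ≤ q := by omega
  have hdq' : 2 * (d : ℝ) + 1 ≤ q := by exact_mod_cast hdq
  set w : ℤ := ⌊y⌋ - ⌊x⌋ with hw
  have e1 : Int.fract y - Int.fract x = d * α - w := by
    rw [Int.fract, Int.fract, hw, hx, hy]; push_cast; ring
  rw [e1] at c
  have e2 : |(d : ℝ) * u - w * q| < 1 := by
    have : (d : ℝ) * u - w * q = (2 * q * (d * α - w)) / 2 - d * q * (α - u / q) := by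
      field_simp; ring
    rw [this]
    have h1 : |(d : ℝ) * q * (α - u / q)| < 1 / 2 := by
      rw [abs_mul, abs_of_nonneg (by positivity)]
      calc (d : ℝ) * q * |α - u / q| ≤ d * q * (1 / (q : ℝ) ^ 2) := by gcongr
        _ = d / q := by field_simp
        _ < 1 / 2 := by rw [div_lt_div_iff₀ hq0 (by norm_num)]; linarith
    rw [abs_lt] at *
    constructor <;> linarith
  have e3 : |(d : ℤ) * u - w * q| < 1 := by exact_mod_cast e2
  have e4 : (d : ℤ) * u - w * q = 0 := Int.abs_lt_one_iff.1 e3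
  have e5 : (q : ℤ) ∣ d * u := ⟨w, by linarith⟩
  have e6 : (q : ℤ) ∣ d := by
    apply IsCoprime.dvd_of_dvd_mul_right _ e5
    rw [Int.isCoprime_iff_gcd_eq_one, Int.gcd_comm]; exact hu
  have e7 : q ∣ d := by exact_mod_cast e6
  have := Nat.le_of_dvd (by omega) e7
  omega

lemma block_sum (N q : ℕ) (hq : 1 ≤ q) (u : ℤ) (hu : Int.gcd u q = 1) (α : ℝ)
    (hα : |α - u / q| ≤ 1 / (q : ℝ) ^ 2) (s : ℕ) :
    ∑ i ∈ range ((q + 1) / 2), mm N (((s + i : ℕ) : ℝ) * α) ≤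
      4 * N + 4 * q * (1 + Real.log (2 * q)) := by
  have hq0 : (0 : ℝ) < q := by exact_mod_cast hq
  set B : ℕ → ℝ := fun k => if k = 0 then 2 * (N : ℝ) else 2 * q / k with hB
  have hBn : ∀ k, 0 ≤ B k := by intro k; simp only [hB]; split_ifs <;> positivity
  set φ : ℕ → ℕ := fun i => ⌊2 * q * Int.fract (((s + i : ℕ) : ℝ) * α)⌋₊ with hφ
  have hφ1 : ∀ i, φ i < 2 * q := by
    intro i
    simp only [hφ]
    rw [Nat.floor_lt (by have := Int.fract_nonneg (((s + i : ℕ) : ℝ) * α); positivity)]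
    have := Int.fract_lt_one (((s + i : ℕ) : ℝ) * α)
    push_cast at *
    nlinarith
  have hmm : ∀ i, mm N (((s + i : ℕ) : ℝ) * α) ≤ B (φ i) + B (2 * q - 1 - φ i) := by
    intro i
    set x := ((s + i : ℕ) : ℝ) * α with hx
    have fx := Int.fract_nonneg x
    have a1 := Nat.floor_le (a := 2 * q * Int.fract x) (by positivity)
    have a2 := Nat.lt_floor_add_one (2 * q * Int.fract x)
    have hr := abs_sub_round_eq_min x
    rcases min_choice (Int.fract x) (1 - Int.fract x) with h | h
    · have := mm_le_div N q (φ i) hq x (by rw [hr, h]; exact a1)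
      have h2 := hBn (2 * q - 1 - φ i)
      have h3 : mm N x ≤ B (φ i) := this
      linarith
    · have h1 : ((2 * q - 1 - φ i : ℕ) : ℝ) ≤ 2 * q * |x - round x| := by
        rw [hr, h]
        have h5 := hφ1 i
        have h6 : ((2 * q - 1 - φ i : ℕ) : ℝ) + φ i + 1 = 2 * q := by
          have : (2 * q - 1 - φ i) + φ i + 1 = 2 * q := by omega
          exact_mod_cast this
        have h7 : 2 * q * Int.fract x < (φ i : ℝ) + 1 := a2
        linarith
      have := mm_le_div N q _ hq x h1
      have h2 := hBn (φ i)
      have h3 : mm N x ≤ B (2 * q - 1 - φ i) := this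
      linarith
  have hinj : Set.InjOn φ (range ((q + 1) / 2) : Finset ℕ) := by
    intro i hi i' hi' h
    simp at hi hi'
    rcases lt_trichotomy i i' with hl | hl | hl
    · exact (block_inj q hq u hu α hα s i i' hl (by omega) h).elim
    · exact hl
    · exact (block_inj q hq u hu α hα s i' i hl (by omega) h.symm).elim
  calc _ ≤ ∑ i ∈ range ((q + 1) / 2), (B (φ i) + B (2 * q - 1 - φ i)) :=
        Finset.sum_le_sum fun i _ => hmm i
    _ = ∑ k ∈ (range ((q + 1) / 2)).image φ, (B k + B (2 * q - 1 - k)) :=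
        (Finset.sum_image (f := fun k => B k + B (2 * q - 1 - k)) hinj).symm
    _ ≤ ∑ k ∈ range (2 * q), (B k + B (2 * q - 1 - k)) := by
        apply Finset.sum_le_sum_of_subset_of_nonneg
        · intro k hk
          obtain ⟨i, _, rfl⟩ := Finset.mem_image.1 hk
          exact Finset.mem_range.2 (hφ1 i)
        · intro k _ _; exact add_nonneg (hBn _) (hBn _)
    _ = 2 * ∑ k ∈ range (2 * q), B k := by
        rw [Finset.sum_add_distrib, Finset.sum_range_reflect]; ring
    _ ≤ 2 * (2 * N + 2 * q * (1 + Real.log (2 * q))) := by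
        gcongr
        obtain ⟨r, hr⟩ : ∃ r, 2 * q = r + 1 := ⟨2 * q - 1, by omega⟩
        rw [hr, Finset.sum_range_succ']
        have e1 : ∀ k ∈ range r, B (k + 1) = 2 * q * ((k : ℝ) + 1)⁻¹ := by
          intro k _
          simp only [hB]; rw [if_neg (by omega)]; push_cast; rw [div_eq_mul_inv]
        rw [Finset.sum_congr rfl e1, ← Finset.mul_sum]
        have e2 := harmonic_le_one_add_log r
        have e3 : ((harmonic r : ℚ) : ℝ) = ∑ k ∈ range r, ((k : ℝ) + 1)⁻¹ := by
          rw [harmonic]; push_cast; rfl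
        rw [e3] at e2
        have e4 : Real.log r ≤ Real.log (2 * q) := by
          have : (r : ℝ) ≤ 2 * q := by
            have : r ≤ 2 * q := by omega
            exact_mod_cast this
          apply Real.log_le_log _ this
          have : 1 ≤ r := by omega
          exact_mod_cast this
        have e5 : B 0 = 2 * N := by simp [hB]
        rw [e5, add_comm]
        gcongr
        linarith
    _ = _ := by ring

lemma long_sum (N q : ℕ) (hq : 1 ≤ q) (u : ℤ) (hu : Int.gcd u q = 1) (α : ℝ)
    (hα : |α - u / q| ≤ 1 / (q : ℝ) ^ 2) (R : ℕ) :
    ∑ r ∈ range R, mm N ((r : ℝ) * α) ≤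
      (2 * R / q + 1) * (4 * N + 4 * q * (1 + Real.log (2 * q))) := by
  have hq0 : (0 : ℝ) < q := by exact_mod_cast hq
  set L := (q + 1) / 2 with hL
  set E := 4 * (N : ℝ) + 4 * q * (1 + Real.log (2 * q)) with hE
  have hE0 : 0 ≤ E := by
    have : 0 ≤ Real.log (2 * q) := Real.log_nonneg (by
      have : (1:ℝ) ≤ q := by exact_mod_cast hq
      linarith)
    positivity
  have h1 : ∀ b : ℕ, ∑ r ∈ range (b * L), mm N ((r : ℝ) * α) ≤ b * E := by
    intro b
    induction b with
    | zero => simp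
    | succ b ih =>
      rw [Nat.succ_mul, Finset.sum_range_add]
      have := block_sum N q hq u hu α hα (b * L)
      push_cast at *
      linarith
  have hLpos : 0 < L := by omega
  have h2 : R ≤ (R / L + 1) * L := by
    rw [Nat.succ_mul]; exact (Nat.lt_div_mul_add hLpos).le
  calc _ ≤ ∑ r ∈ range ((R / L + 1) * L), mm N ((r : ℝ) * α) :=
        Finset.sum_le_sum_of_subset_of_nonneg (Finset.range_subset_range.2 h2)
          fun _ _ _ => mm_nonneg _ _
    _ ≤ ((R / L + 1 : ℕ) : ℝ) * E := h1 _
    _ ≤ _ := by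
      gcongr
      push_cast
      gcongr
      calc ((R / L : ℕ) : ℝ) ≤ R / L := Nat.cast_div_le
        _ ≤ R / (q / 2) := by
          have : q ≤ 2 * L := by omega
          have : (q : ℝ) ≤ 2 * L := by exact_mod_cast this
          gcongr
          linarith
        _ = 2 * R / q := by field_simp

lemma power_saving (j : ℕ) (hj : 1 ≤ j) (Δ : ℝ) (hΔ0 : 0 < Δ) (hΔ1 : Δ < 1) :
    ∃ C : ℝ, 0 ≤ C ∧ ∀ (N : ℕ), 1 ≤ N → ∀ (q : ℕ) (u : ℤ) (α : ℝ), 1 ≤ q → Int.gcd u q = 1 →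
      |α - u / q| ≤ 1 / (q : ℝ) ^ 2 → (N : ℝ) ^ Δ < q → (q : ℝ) ≤ (N : ℝ) ^ (((j + 1 : ℕ) : ℝ) - Δ) →
      ∀ P : Polynomial ℝ, P.natDegree ≤ j + 1 → P.coeff (j + 1) = α →
      ‖∑ i ∈ range N, ee (P.eval (i : ℝ))‖ ≤ C * (N : ℝ) ^ (1 - Δ / 2 ^ (j + 1)) := by
  have hj0 : (1 : ℝ) ≤ j := by exact_mod_cast hj
  obtain ⟨C1, hC1, hdiv⟩ := divisor_bound (Δ / (4 * j ^ 2)) (by positivity)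
  set ε2 : ℝ := Δ / (4 * (j + 1)) with hε2
  have hε2p : 0 < ε2 := by positivity
  set C2 : ℝ := 1 + 2 / ε2 with hC2
  have hC2p : 0 ≤ C2 := by positivity
  set F : ℝ := ((j + 1).factorial : ℝ) with hF
  have hF1 : 1 ≤ F := by rw [hF]; exact_mod_cast Nat.factorial_pos _
  set C3 : ℝ := 16 * F + 16 * F * C2 + 4 + 4 * C2 with hC3
  have hC3p : 0 ≤ C3 := by positivity
  set C4 : ℝ := 2 * j + C1 ^ j * C3 with hC4
  have hC4p : 0 ≤ C4 := by positivity
  set C5 : ℝ := 2 ^ (2 ^ j) * C4 with hC5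
  have hC5p : 0 ≤ C5 := by positivity
  refine ⟨C5 + 1, by positivity, ?_⟩
  intro N hN q u α hq hu hα hqlo hqhi P hPd hPc
  set X : ℝ := (N : ℝ) with hX
  have hX1 : 1 ≤ X := by rw [hX]; exact_mod_cast hN
  have hX0 : 0 < X := by linarith
  have hq1 : (1 : ℝ) ≤ q := by exact_mod_cast hq
  have hq0 : (0 : ℝ) < q := by linarith
  set Y : ℝ := X ^ (((j + 1 : ℕ) : ℝ) - Δ) with hY
  set E : ℝ := X ^ (Δ / 4) with hE
  have hY0 : 0 < Y := Real.rpow_pos_of_pos hX0 _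
  have hE1 : 1 ≤ E := Real.one_le_rpow hX1 (by positivity)
  have hXjY : X ^ j ≤ Y := by
    rw [hY, ← Real.rpow_natCast]
    apply Real.rpow_le_rpow_of_exponent_le hX1
    push_cast; linarith
  have hXY : X ≤ Y := by
    calc X = X ^ (1 : ℝ) := (Real.rpow_one X).symm
      _ ≤ Y := by
        apply Real.rpow_le_rpow_of_exponent_le hX1
        push_cast; linarith
  have hXq : X ^ (j + 1) / q ≤ Y := by
    rw [div_le_iff₀ hq0]
    calc X ^ (j + 1) = Y * X ^ Δ := by
          rw [hY, ← Real.rpow_add hX0, ← Real.rpow_natCast]; congr 1; ring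
      _ ≤ Y * q := by gcongr
  have hlog : 1 + Real.log (2 * q) ≤ C2 * E := by
    have h1 : Real.log (2 * q) ≤ (2 * q : ℝ) ^ ε2 / ε2 :=
      Real.log_le_rpow_div (by positivity) hε2p
    have h2 : (2 * q : ℝ) ^ ε2 ≤ 2 * E := by
      rw [Real.mul_rpow (by norm_num) (by positivity)]
      have a : (2 : ℝ) ^ ε2 ≤ 2 := by
        calc (2 : ℝ) ^ ε2 ≤ 2 ^ (1 : ℝ) := by
              apply Real.rpow_le_rpow_of_exponent_le (by norm_num)
              rw [hε2, div_le_one (by positivity)]; linarith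
          _ = 2 := Real.rpow_one _
      have b : (q : ℝ) ^ ε2 ≤ E := by
        calc (q : ℝ) ^ ε2 ≤ Y ^ ε2 := by gcongr
          _ = X ^ ((((j + 1 : ℕ) : ℝ) - Δ) * ε2) := by rw [hY, ← Real.rpow_mul hX0.le]
          _ ≤ E := by
            apply Real.rpow_le_rpow_of_exponent_le hX1
            have : (((j + 1 : ℕ) : ℝ)) * ε2 = Δ / 4 := by
              rw [hε2]; push_cast; field_simp
            rw [sub_mul, this]
            have : 0 < Δ * ε2 := by positivity
            linarith
      gcongr
    calc 1 + Real.log (2 * q) ≤ 1 * E + 2 * E / ε2 := by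
          have : (2 * q : ℝ) ^ ε2 / ε2 ≤ 2 * E / ε2 := by gcongr
          linarith
      _ = C2 * E := by rw [hC2]; ring
  -- divisor bound
  set D : ℝ := C1 * ((X ^ j) ^ (Δ / (4 * j ^ 2))) with hD
  have hD0 : 0 ≤ D := by positivity
  have hDm : ∀ m ∈ Icc 1 (N ^ j), (m.divisors.card : ℝ) ≤ D := by
    intro m hm
    rw [Finset.mem_Icc] at hm
    refine (hdiv m (by omega)).trans ?_
    rw [hD]
    gcongr
    rw [hX]; exact_mod_cast hm.2
  have hDj : D ^ j = C1 ^ j * E := by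
    rw [hD, mul_pow, hE]
    congr 1
    rw [← Real.rpow_natCast, ← Real.rpow_natCast, ← Real.rpow_mul hX0.le, ← Real.rpow_mul hX0.le]
    congr 1
    field_simp
  have hUU := UU_bound N j hN D hD0 hDm j le_rfl
    (fun k => mm N (((j + 1).factorial * k : ℕ) * α)) (fun k => mm_nonneg _ _) (fun k => mm_le _ _)
  have hsum : ∑ p ∈ Icc 1 (N ^ j), mm N (((j + 1).factorial * p : ℕ) * α) ≤ C3 * (Y * E) := by
    have hfp := Nat.factorial_pos (j + 1)
    calc _ = ∑ r ∈ (Icc 1 (N ^ j)).image (fun p => (j + 1).factorial * p), mm N ((r : ℝ) * α) := by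
          rw [Finset.sum_image]
          intro a _ b _ h
          exact Nat.eq_of_mul_eq_mul_left hfp h
      _ ≤ ∑ r ∈ range ((j + 1).factorial * N ^ j + 1), mm N ((r : ℝ) * α) := by
          apply Finset.sum_le_sum_of_subset_of_nonneg
          · intro r hr
            obtain ⟨p, hp, rfl⟩ := Finset.mem_image.1 hr
            rw [Finset.mem_Icc] at hp
            rw [Finset.mem_range]
            exact Nat.lt_succ_of_le (Nat.mul_le_mul_left _ hp.2)
          · intro _ _ _; exact mm_nonneg _ _
      _ ≤ _ := long_sum N q hq u hu α hα _
      _ ≤ (4 * F * X ^ j / q + 1) * (4 * X + 4 * q * (C2 * E)) := by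
          have : ((((j + 1).factorial * N ^ j + 1 : ℕ)) : ℝ) ≤ 2 * F * X ^ j := by
            push_cast
            have : 1 ≤ F * X ^ j := one_le_mul_of_one_le_of_one_le hF1 (one_le_pow₀ hX1)
            linarith
          have h2 : 2 * ((((j + 1).factorial * N ^ j + 1 : ℕ)) : ℝ) / q ≤ 4 * F * X ^ j / q := by
            exact div_le_div_of_nonneg_right (by linarith) hq0.le
          have h3 : 0 ≤ Real.log (2 * q) := Real.log_nonneg (by linarith)
          gcongr
      _ = 16 * F * (X ^ (j + 1) / q) + 16 * F * C2 * (X ^ j * E) + 4 * X + 4 * C2 * (q * E) := by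
          field_simp; ring
      _ ≤ 16 * F * (Y * E) + 16 * F * C2 * (Y * E) + 4 * (Y * E) + 4 * C2 * (Y * E) := by
          have h1 : Y ≤ Y * E := le_mul_of_one_le_right hY0.le hE1
          gcongr
          · exact hXq.trans h1
          · exact hXY.trans h1
      _ = C3 * (Y * E) := by rw [hC3]; ring
  have hU : UU N j (fun k => mm N (((j + 1).factorial * k : ℕ) * α)) ≤ C4 * (Y * E ^ 2) := by
    refine hUU.trans ?_
    rw [hDj]
    calc _ ≤ 2 * j * (Y * E ^ 2) + C1 ^ j * E * (C3 * (Y * E)) := by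
          have h1 : Y ≤ Y * E ^ 2 := le_mul_of_one_le_right hY0.le (one_le_pow₀ hE1)
          gcongr
          exact hXjY.trans h1
      _ = _ := by rw [hC4]; ring
  have hw := weyl N hN j N le_rfl α P hPd hPc
  set S := ‖∑ i ∈ range N, ee (P.eval (i : ℝ))‖ with hS
  set Z : ℝ := X ^ (1 - Δ / 2 ^ (j + 1)) with hZ
  have hZ0 : 0 < Z := Real.rpow_pos_of_pos hX0 _
  have hZp : X ^ (2 ^ j) * (Y * E ^ 2) = Z ^ (2 ^ j) * X ^ (j + 1) := by
    have a1 : X ^ (2 ^ j) = X ^ ((2 : ℝ) ^ j) := by rw [← Real.rpow_natCast]; push_cast; rfl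
    have a2 : X ^ (j + 1) = X ^ ((j : ℝ) + 1) := by rw [← Real.rpow_natCast]; push_cast; rfl
    have a3 : E ^ 2 = X ^ (Δ / 2) := by
      rw [hE, ← Real.rpow_natCast, ← Real.rpow_mul hX0.le]; congr 1; push_cast; ring
    have a4 : Z ^ (2 ^ j) = X ^ ((2 : ℝ) ^ j - Δ / 2) := by
      rw [hZ, ← Real.rpow_natCast, ← Real.rpow_mul hX0.le]; congr 1; push_cast
      rw [pow_succ]; field_simp
    rw [a1, a2, a3, a4, hY, ← Real.rpow_add hX0, ← Real.rpow_add hX0, ← Real.rpow_add hX0]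
    congr 1
    push_cast
    ring
  have h1 : S ^ (2 ^ j) * X ^ (j + 1) ≤ (C5 * Z ^ (2 ^ j)) * X ^ (j + 1) := by
    calc _ ≤ _ := hw
      _ ≤ 2 ^ (2 ^ j) * X ^ (2 ^ j) * (C4 * (Y * E ^ 2)) := by gcongr
      _ = C5 * (X ^ (2 ^ j) * (Y * E ^ 2)) := by rw [hC5]; ring
      _ = _ := by rw [hZp]; ring
  have h2 : S ^ (2 ^ j) ≤ C5 * Z ^ (2 ^ j) := le_of_mul_le_mul_right h1 (by positivity)
  have h3 : C5 ≤ (C5 + 1) ^ (2 ^ j) := by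
    calc C5 ≤ C5 + 1 := by linarith
      _ ≤ _ := le_self_pow₀ (by linarith) (by positivity)
  have h4 : S ^ (2 ^ j) ≤ ((C5 + 1) * Z) ^ (2 ^ j) := by
    rw [mul_pow]; exact h2.trans (by gcongr)
  exact (pow_le_pow_iff_left₀ (norm_nonneg _) (by positivity) (by positivity)).1 h4

/-- antisymmetrised coefficient -/
noncomputable def aco (n : ℕ) (t x : ℝ) (k : ℕ) : ℂ :=
  ee (t * (k : ℝ) ^ n + x * k) - ee (t * (-(k : ℝ)) ^ n + x * (-(k : ℝ)))

/-- its partial sums -/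
noncomputable def Aco (n : ℕ) (t x : ℝ) (K : ℕ) : ℂ := ∑ k ∈ range (K + 1), aco n t x k

lemma SK_succ (n : ℕ) (t x : ℝ) (K : ℕ) :
    SK n t x (K + 1) = SK n t x K + aco n t x (K + 1) / ((K : ℂ) + 1) := by
  unfold SK
  have h : (Icc (-((K + 1 : ℕ) : ℤ)) ((K + 1 : ℕ) : ℤ)).filter (· ≠ 0) =
      insert ((K : ℤ) + 1) (insert (-((K : ℤ) + 1))
        ((Icc (-(K : ℤ)) (K : ℤ)).filter (· ≠ 0))) := by
    ext k
    simp only [Finset.mem_filter, Finset.mem_Icc, Finset.mem_insert]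
    push_cast
    omega
  rw [h, Finset.sum_insert, Finset.sum_insert]
  · unfold aco
    push_cast
    have : ((K : ℂ) + 1) ≠ 0 := by exact_mod_cast Nat.succ_ne_zero K
    rw [div_neg]
    ring
  · simp
  · simp only [Finset.mem_filter, Finset.mem_Icc, Finset.mem_insert]
    omega

lemma SK_eq (n : ℕ) (t x : ℝ) (K : ℕ) :
    SK n t x K = Aco n t x K / ((K : ℂ) + 1) +
      ∑ k ∈ range K, Aco n t x (k + 1) / (((k : ℂ) + 1) * ((k : ℂ) + 2)) := by
  induction K with
  | zero => simp [SK, Aco, aco, Finset.filter_singleton]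
  | succ K ih =>
    rw [SK_succ, ih, Finset.sum_range_succ]
    have h : Aco n t x (K + 1) = Aco n t x K + aco n t x (K + 1) := by
      unfold Aco; rw [Finset.sum_range_succ _ (K + 1)]
    rw [h]
    have h1 : ((K : ℂ) + 1) ≠ 0 := by exact_mod_cast Nat.succ_ne_zero K
    have h2 : ((K : ℂ) + 2) ≠ 0 := by exact_mod_cast Nat.succ_ne_zero (K + 1)
    have h3 : ((K : ℂ) + 1 + 1) ≠ 0 := by exact_mod_cast Nat.succ_ne_zero (K + 1)
    push_cast
    field_simp
    ring

open Polynomial in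
lemma poly_phase (n : ℕ) (hn : 2 ≤ n) (a b : ℝ) :
    (C a * X ^ n + C b * X : ℝ[X]).natDegree ≤ n ∧ (C a * X ^ n + C b * X : ℝ[X]).coeff n = a := by
  constructor
  · refine natDegree_add_le_of_degree_le (natDegree_C_mul_X_pow_le a n) ?_
    exact ((natDegree_C_mul_le b X).trans natDegree_X_le).trans (by omega)
  · simp [coeff_X, show ¬ (1 = n) by omega]

lemma Aco_bound (n : ℕ) (hn : 2 ≤ n) (Δ : ℝ) (hΔ0 : 0 < Δ) (hΔ1 : Δ < 1) (t : ℝ)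
    (ht : t ∈ Aall n Δ) : ∃ C δ : ℝ, 0 ≤ C ∧ 0 < δ ∧ δ < 1 ∧ ∀ (K : ℕ) (x : ℝ),
      ‖Aco n t x K‖ ≤ C * ((K : ℝ) + 1) ^ (1 - δ) := by
  obtain ⟨j, rfl⟩ : ∃ j, n = j + 1 := ⟨n - 1, by omega⟩
  obtain ⟨_, M₀, hM⟩ := ht
  obtain ⟨C, hC, hps⟩ := power_saving j (by omega) Δ hΔ0 hΔ1
  have hδ1 : Δ / 2 ^ (j + 1) < 1 := by
    rw [div_lt_one (by positivity)]
    exact hΔ1.trans_le (one_le_pow₀ (by norm_num))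
  refine ⟨2 * C + 2 * |M₀|, Δ / 2 ^ (j + 1), by positivity, by positivity, hδ1, fun K x => ?_⟩
  set δ := Δ / 2 ^ (j + 1) with hδ
  have hZ : 1 ≤ ((K : ℝ) + 1) ^ (1 - δ) :=
    Real.one_le_rpow (by have : (0:ℝ) ≤ K := by positivity
                         linarith) (by linarith)
  by_cases hK : M₀ ≤ (K : ℝ) + 1
  · obtain ⟨u, q, ⟨hq1, hgcd, happ⟩, hlo, hhi⟩ := hM _ hK
    lift q to ℕ using by omega
    have hq1' : 1 ≤ q := by exact_mod_cast hq1
    push_cast at happ hlo hhi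
    have e : ((K + 1 : ℕ) : ℝ) = (K : ℝ) + 1 := by push_cast; rfl
    have key : ∀ (α : ℝ) (v : ℤ) (b : ℝ), Int.gcd v q = 1 → |α - v / q| ≤ 1 / (q : ℝ) ^ 2 →
        ‖∑ i ∈ range (K + 1), ee (α * (i : ℝ) ^ (j + 1) + b * i)‖ ≤ C * ((K : ℝ) + 1) ^ (1 - δ) := by
      intro α v b hv hα
      obtain ⟨p1, p2⟩ := poly_phase (j + 1) hn α b
      have := hps (K + 1) (by omega) q v α hq1' hv hα (by rw [e]; exact hlo)
        (by rw [e]; push_cast; exact hhi) _ p1 p2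
      rw [e] at this
      simpa using this
    have k1 := key t u x hgcd happ.le
    have k2 : ‖∑ i ∈ range (K + 1), ee (t * (-(i : ℝ)) ^ (j + 1) + x * (-(i : ℝ)))‖ ≤
        C * ((K : ℝ) + 1) ^ (1 - δ) := by
      rcases Nat.even_or_odd (j + 1) with hp | hp
      · have := key t u (-x) hgcd happ.le
        simpa [hp.neg_pow] using this
      · have := key (-t) (-u) (-x) (by rwa [Int.neg_gcd]) (by
          have : -t - ((-u : ℤ) : ℝ) / q = -(t - u / q) := by push_cast; ring
          rw [this, abs_neg]; exact happ.le)
        simpa [hp.neg_pow] using this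
    unfold Aco aco
    rw [Finset.sum_sub_distrib]
    have h1 := norm_sub_le (∑ i ∈ range (K + 1), ee (t * (i : ℝ) ^ (j + 1) + x * i))
      (∑ i ∈ range (K + 1), ee (t * (-(i : ℝ)) ^ (j + 1) + x * (-(i : ℝ))))
    have h2 : 0 ≤ 2 * |M₀| * ((K : ℝ) + 1) ^ (1 - δ) := by positivity
    linarith
  · push Not at hK
    have h1 : ‖Aco (j + 1) t x K‖ ≤ 2 * ((K : ℝ) + 1) := by
      unfold Aco
      refine (norm_sum_le _ _).trans ?_
      calc _ ≤ ∑ k ∈ range (K + 1), (2 : ℝ) := by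
            refine Finset.sum_le_sum fun k _ => ?_
            unfold aco
            refine (norm_sub_le _ _).trans ?_
            rw [norm_ee, norm_ee]; norm_num
        _ = _ := by simp; ring
    have h2 := le_abs_self M₀
    have h3 : |M₀| ≤ |M₀| * ((K : ℝ) + 1) ^ (1 - δ) := le_mul_of_one_le_right (abs_nonneg _) hZ
    have h4 : 0 ≤ 2 * C * ((K : ℝ) + 1) ^ (1 - δ) := by positivity
    linarith

/-- if `t ∈ 𝒜` then the partial sums `S_K(t,·)` converge uniformly in `x`. -/
theorem stmt8 (n : ℕ) (hn : 2 ≤ n) (Δ : ℝ) (hΔ0 : 0 < Δ) (hΔ1 : Δ < 1)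
    (hΔ2 : n = 2 → Δ < 1 / 2) (t : ℝ) (ht : t ∈ Aall n Δ) :
    ∃ S : ℝ → ℂ, TendstoUniformly (fun (K : ℕ) (x : ℝ) => SK n t x K) S atTop := by
  obtain ⟨C, δ, hC, hδ0, hδ1, hA⟩ := Aco_bound n hn Δ hΔ0 hΔ1 t ht
  have hf : ∀ (k : ℕ) (x : ℝ), ‖Aco n t x (k + 1) / (((k : ℂ) + 1) * ((k : ℂ) + 2))‖ ≤
      2 * C * (((k + 2 : ℕ) : ℝ) ^ (1 + δ))⁻¹ := by
    intro k x
    have hk : (0 : ℝ) ≤ k := by positivity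
    have e1 : ‖(k : ℂ) + 1‖ = (k : ℝ) + 1 := by
      have : (k : ℂ) + 1 = ((k + 1 : ℕ) : ℂ) := by push_cast; rfl
      rw [this, Complex.norm_natCast]; push_cast; rfl
    have e2 : ‖(k : ℂ) + 2‖ = (k : ℝ) + 2 := by
      have : (k : ℂ) + 2 = ((k + 2 : ℕ) : ℂ) := by push_cast; rfl
      rw [this, Complex.norm_natCast]; push_cast; rfl
    rw [norm_div, norm_mul, e1, e2, div_le_iff₀ (by positivity)]
    refine (hA (k + 1) x).trans ?_
    push_cast
    have e3 : (k : ℝ) + 1 + 1 = k + 2 := by ring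
    rw [e3]
    have e4 : ((k : ℝ) + 2) ^ (1 - δ) = ((k : ℝ) + 2) ^ 2 * (((k : ℝ) + 2) ^ (1 + δ))⁻¹ := by
      rw [← Real.rpow_neg (by positivity), ← Real.rpow_natCast, ← Real.rpow_add (by positivity)]
      congr 1; push_cast; ring
    rw [e4]
    have e5 : ((k : ℝ) + 2) ^ 2 ≤ 2 * (((k : ℝ) + 1) * ((k : ℝ) + 2)) := by nlinarith
    calc _ ≤ C * (2 * (((k : ℝ) + 1) * ((k : ℝ) + 2)) * (((k : ℝ) + 2) ^ (1 + δ))⁻¹) := by gcongr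
      _ = _ := by ring
  have hsum : Summable (fun k : ℕ => 2 * C * (((k + 2 : ℕ) : ℝ) ^ (1 + δ))⁻¹) := by
    apply Summable.mul_left
    exact (summable_nat_add_iff 2).2 (Real.summable_nat_rpow_inv.2 (by linarith))
  have hT := tendstoUniformly_tsum_nat hsum hf
  refine ⟨fun x => ∑' k : ℕ, Aco n t x (k + 1) / (((k : ℂ) + 1) * ((k : ℂ) + 2)), ?_⟩
  rw [Metric.tendstoUniformly_iff] at hT ⊢
  intro ε hε
  have h0 : Tendsto (fun K : ℕ => C * (((K + 1 : ℕ) : ℝ) ^ δ)⁻¹) atTop (nhds 0) := by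
    have h1 : Tendsto (fun K : ℕ => ((K + 1 : ℕ) : ℝ)) atTop atTop :=
      (tendsto_natCast_atTop_atTop (R := ℝ)).comp (tendsto_add_atTop_nat 1)
    have h2 := ((tendsto_rpow_atTop hδ0).comp h1).inv_tendsto_atTop.const_mul C
    simpa using h2
  filter_upwards [hT (ε / 2) (by positivity), h0.eventually (gt_mem_nhds (half_pos hε))]
    with K h1 h2 x
  have h3 := h1 x
  rw [SK_eq]
  have h4 : ‖Aco n t x K / ((K : ℂ) + 1)‖ < ε / 2 := by
    refine lt_of_le_of_lt ?_ h2
    have e1 : ‖(K : ℂ) + 1‖ = (K : ℝ) + 1 := by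
      have : (K : ℂ) + 1 = ((K + 1 : ℕ) : ℂ) := by push_cast; rfl
      rw [this, Complex.norm_natCast]; push_cast; rfl
    rw [norm_div, e1, div_le_iff₀ (by positivity)]
    refine (hA K x).trans (le_of_eq ?_)
    push_cast
    rw [mul_assoc]
    congr 1
    rw [← Real.rpow_neg (by positivity), ← Real.rpow_add_one (by positivity)]
    congr 1; ring
  rw [dist_eq_norm] at h3 ⊢
  set V := ∑ k ∈ range K, Aco n t x (k + 1) / (((k : ℂ) + 1) * ((k : ℂ) + 2))
  set W := ∑' k : ℕ, Aco n t x (k + 1) / (((k : ℂ) + 1) * ((k : ℂ) + 2))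
  have h5 : W - (Aco n t x K / ((K : ℂ) + 1) + V) = (W - V) - Aco n t x K / ((K : ℂ) + 1) := by ring
  rw [h5]
  have := norm_sub_le (W - V) (Aco n t x K / ((K : ℂ) + 1))
  linarith
end
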